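/- arXiv:2308.10547 — 7 statements merged into one kernel-verified Lean document; each statement's English description precedes it below -/
import Mathlib

section
/- Let f : ℝ^{d×r} → ℝ be differentiable with L-Lipschitz Euclidean gradient (‖∇f(x) − ∇f(y)‖ ≤ L‖x − y‖ for all x, y ∈ ℝ^{d×r}), and let L_f be a constant with ‖∇f(x)‖ ≤ L_f for all x ∈ St(d,r). Then with L_g := L + 2L_f, for all x, y ∈ St(d,r) one has ‖grad f(x) − grad f(y)‖ ≤ L_g ‖x − y‖ (Lipschitz-type inequality for the Riemannian gradient on the Stiefel manifold). -/
open scoped RealInnerProductSpace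

attribute [local instance] Matrix.frobeniusNormedAddCommGroup Matrix.frobeniusNormedSpace

/-- The Stiefel manifold `St(d,r) = {x ∈ ℝ^{d×r} : xᵀx = I_r}`, viewed as a subset of the
`d × r` real matrices equipped with the Frobenius norm. -/
def Stiefel (d r : ℕ) : Set (Matrix (Fin d) (Fin r) ℝ) :=
  {x | x.transpose * x = 1}

/-- Orthogonal projection onto the tangent space of the Stiefel manifold at `x`:
`P_{T_x}(v) = v - (1/2)·x·(xᵀv + vᵀx)`. -/
noncomputable def Tproj {d r : ℕ} (x v : Matrix (Fin d) (Fin r) ℝ) :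
    Matrix (Fin d) (Fin r) ℝ :=
  v - (1 / 2 : ℝ) • (x * (x.transpose * v + v.transpose * x))

/-- `p` is a nearest-point projection of `z` onto the set `S` (w.r.t. the Frobenius norm). -/
def IsNearestPoint {d r : ℕ} (S : Set (Matrix (Fin d) (Fin r) ℝ))
    (z p : Matrix (Fin d) (Fin r) ℝ) : Prop :=
  p ∈ S ∧ ∀ q ∈ S, ‖z - p‖ ≤ ‖z - q‖

/-- The second largest singular value of a real symmetric matrix `W`: the singular values are
the absolute values of the eigenvalues, and the second largest element (with multiplicity) of
the family `i ↦ |λ_i|` is `sup_{i ≠ j} min |λ_i| |λ_j|`. -/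
noncomputable def sigma2 {n : ℕ} (W : Matrix (Fin n) (Fin n) ℝ) (hW : W.IsHermitian) : ℝ :=
  ⨆ p : {p : Fin n × Fin n // p.1 ≠ p.2}, min |hW.eigenvalues p.1.1| |hW.eigenvalues p.1.2|

/-! The tangent projection replaces the component `x xᵀv` of `v` in the column space of `x` by
`x · ½(xᵀv - vᵀx)` and leaves the orthogonal component alone; skew-symmetrisation does not increase
the Frobenius norm, so by Pythagoras `P_{T_x}` is a linear contraction. In its base point
`P_{T_x}(v)` is `2‖v‖`-Lipschitz: `S_x := xᵀv + vᵀx` is linear in `x`, hence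
`P_{T_x}(v) - P_{T_y}(v) = -½((x - y) S_x + y S_{x-y})`, and each summand in the bracket has norm at
most `2‖v‖‖x - y‖`. The gradient bound follows by splitting
`P_{T_x}(v) - P_{T_y}(w) = P_{T_x}(v - w) + (P_{T_x}(w) - P_{T_y}(w))`. -/

section Frobenius

open scoped Matrix

variable {𝕜 m n k : Type*} [RCLike 𝕜] [Fintype m] [Fintype n] [Fintype k]

theorem frobenius_norm_sq (A : Matrix m n 𝕜) : ‖A‖ ^ 2 = RCLike.re (Aᴴ * A).trace := by
  rw [Matrix.frobenius_norm_def, ← Real.sqrt_eq_rpow, Real.sq_sqrt (by positivity),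
    Finset.sum_comm]
  simp only [Matrix.trace, Matrix.diag_apply, Matrix.mul_apply, Matrix.conjTranspose_apply,
    RCLike.star_def, RCLike.conj_mul, map_sum, ← RCLike.ofReal_pow, RCLike.ofReal_re,
    Real.rpow_two]

theorem frobenius_norm_add_sq_of_conjTranspose_mul_eq_zero {A B : Matrix m n 𝕜}
    (h : Aᴴ * B = 0) : ‖A + B‖ ^ 2 = ‖A‖ ^ 2 + ‖B‖ ^ 2 := by
  have h' : Bᴴ * A = 0 := by simpa using congrArg Matrix.conjTranspose h
  simp only [frobenius_norm_sq, Matrix.conjTranspose_add, Matrix.add_mul, Matrix.mul_add, h, h',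
    add_zero, zero_add, Matrix.trace_add, map_add]

theorem frobenius_norm_add_transpose_le {α : Type*} [NormedAddCommGroup α]
    (A : Matrix n n α) : ‖A + Aᵀ‖ ≤ 2 * ‖A‖ := by
  simpa only [Matrix.frobenius_norm_transpose, two_mul] using norm_add_le A Aᵀ

theorem frobenius_norm_sub_transpose_le {α : Type*} [NormedAddCommGroup α]
    (A : Matrix n n α) : ‖A - Aᵀ‖ ≤ 2 * ‖A‖ := by
  simpa only [Matrix.frobenius_norm_transpose, two_mul] using norm_sub_le A Aᵀ

theorem frobenius_norm_transpose_mul_add_transpose_mul_le (A B : Matrix m n 𝕜) :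
    ‖Aᵀ * B + Bᵀ * A‖ ≤ 2 * ‖Aᵀ * B‖ := by
  simpa only [Matrix.transpose_mul, Matrix.transpose_transpose] using
    frobenius_norm_add_transpose_le (Aᵀ * B)

variable [DecidableEq n] {U : Matrix m n 𝕜}

theorem frobenius_norm_mul_of_conjTranspose_mul_self_eq_one (hU : Uᴴ * U = 1)
    (A : Matrix n k 𝕜) : ‖U * A‖ = ‖A‖ := by
  rw [← sq_eq_sq₀ (norm_nonneg _) (norm_nonneg _), frobenius_norm_sq, frobenius_norm_sq,
    Matrix.conjTranspose_mul, Matrix.mul_assoc, ← Matrix.mul_assoc Uᴴ, hU, Matrix.one_mul]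

theorem frobenius_norm_sub_add_mul_sq (hU : Uᴴ * U = 1) (v : Matrix m k 𝕜) (A : Matrix n k 𝕜) :
    ‖v - U * (Uᴴ * v) + U * A‖ ^ 2 = ‖v - U * (Uᴴ * v)‖ ^ 2 + ‖A‖ ^ 2 := by
  have range_orthogonal : (v - U * (Uᴴ * v))ᴴ * (U * A) = 0 := by
    rw [← Matrix.mul_assoc, Matrix.conjTranspose_sub, Matrix.sub_mul]
    simp only [Matrix.conjTranspose_mul, Matrix.conjTranspose_conjTranspose, Matrix.mul_assoc, hU,
      Matrix.mul_one, sub_self, Matrix.zero_mul]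
  rw [frobenius_norm_add_sq_of_conjTranspose_mul_eq_zero range_orthogonal,
    frobenius_norm_mul_of_conjTranspose_mul_self_eq_one hU]

theorem frobenius_norm_sq_eq_add_norm_conjTranspose_mul_sq (hU : Uᴴ * U = 1)
    (v : Matrix m k 𝕜) : ‖v‖ ^ 2 = ‖v - U * (Uᴴ * v)‖ ^ 2 + ‖Uᴴ * v‖ ^ 2 := by
  rw [← frobenius_norm_sub_add_mul_sq hU, sub_add_cancel]

theorem frobenius_norm_conjTranspose_mul_le (hU : Uᴴ * U = 1) (v : Matrix m k 𝕜) :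
    ‖Uᴴ * v‖ ≤ ‖v‖ := by
  refine le_of_sq_le_sq ?_ (norm_nonneg v)
  rw [frobenius_norm_sq_eq_add_norm_conjTranspose_mul_sq hU v]
  exact le_add_of_nonneg_left (sq_nonneg _)

theorem frobenius_norm_sub_add_mul_le (hU : Uᴴ * U = 1) {v : Matrix m k 𝕜} {A : Matrix n k 𝕜}
    (hA : ‖A‖ ≤ ‖Uᴴ * v‖) : ‖v - U * (Uᴴ * v) + U * A‖ ≤ ‖v‖ := by
  refine le_of_sq_le_sq ?_ (norm_nonneg v)
  rw [frobenius_norm_sub_add_mul_sq hU, frobenius_norm_sq_eq_add_norm_conjTranspose_mul_sq hU v]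
  gcongr

end Frobenius

section TangentProjection

open scoped Matrix

variable {d r : ℕ} {x y : Matrix (Fin d) (Fin r) ℝ}

theorem conjTranspose_mul_self_of_mem_Stiefel (hx : x ∈ Stiefel d r) : xᴴ * x = 1 := by
  rwa [Matrix.conjTranspose_eq_transpose_of_trivial]

theorem Tproj_sub (x v w : Matrix (Fin d) (Fin r) ℝ) :
    Tproj x (v - w) = Tproj x v - Tproj x w := by
  simp only [Tproj, Matrix.transpose_sub, Matrix.sub_mul, Matrix.mul_sub, Matrix.mul_add, smul_add,
    smul_sub]
  abel

theorem Tproj_eq_sub_add_mul_skew (x v : Matrix (Fin d) (Fin r) ℝ) :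
    Tproj x v = v - x * (xᵀ * v) + x * ((1 / 2 : ℝ) • (xᵀ * v - (xᵀ * v)ᵀ)) := by
  simp only [Tproj, Matrix.transpose_mul, Matrix.transpose_transpose, Matrix.mul_smul,
    Matrix.mul_add, Matrix.mul_sub]
  module

theorem norm_Tproj_le (hx : x ∈ Stiefel d r) (v : Matrix (Fin d) (Fin r) ℝ) :
    ‖Tproj x v‖ ≤ ‖v‖ := by
  have skew_le : ‖(1 / 2 : ℝ) • (xᵀ * v - (xᵀ * v)ᵀ)‖ ≤ ‖xᵀ * v‖ := by
    rw [norm_smul, Real.norm_of_nonneg (by norm_num)]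
    linarith [frobenius_norm_sub_transpose_le (xᵀ * v)]
  rw [Tproj_eq_sub_add_mul_skew]
  rw [← Matrix.conjTranspose_eq_transpose_of_trivial x] at skew_le ⊢
  exact frobenius_norm_sub_add_mul_le (conjTranspose_mul_self_of_mem_Stiefel hx) skew_le

theorem Tproj_sub_Tproj_left (x y v : Matrix (Fin d) (Fin r) ℝ) :
    Tproj x v - Tproj y v = -((1 / 2 : ℝ) •
      ((x - y) * (xᵀ * v + vᵀ * x) + y * ((x - y)ᵀ * v + vᵀ * (x - y)))) := by
  simp only [Tproj, Matrix.transpose_sub, Matrix.sub_mul, Matrix.mul_sub, Matrix.mul_add]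
  module

theorem norm_Tproj_sub_Tproj_left_le (hx : x ∈ Stiefel d r) (hy : y ∈ Stiefel d r)
    (v : Matrix (Fin d) (Fin r) ℝ) : ‖Tproj x v - Tproj y v‖ ≤ 2 * ‖v‖ * ‖x - y‖ := by
  have transpose_mul_le : ‖xᵀ * v‖ ≤ ‖v‖ := by
    simpa only [Matrix.conjTranspose_eq_transpose_of_trivial] using
      frobenius_norm_conjTranspose_mul_le (conjTranspose_mul_self_of_mem_Stiefel hx) v
  have left_le : ‖(x - y) * (xᵀ * v + vᵀ * x)‖ ≤ ‖x - y‖ * (2 * ‖v‖) :=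
    calc ‖(x - y) * (xᵀ * v + vᵀ * x)‖
        ≤ ‖x - y‖ * ‖xᵀ * v + vᵀ * x‖ := Matrix.frobenius_norm_mul _ _
      _ ≤ ‖x - y‖ * (2 * ‖xᵀ * v‖) := by
        gcongr
        exact frobenius_norm_transpose_mul_add_transpose_mul_le x v
      _ ≤ ‖x - y‖ * (2 * ‖v‖) := by gcongr
  have right_le : ‖y * ((x - y)ᵀ * v + vᵀ * (x - y))‖ ≤ 2 * (‖x - y‖ * ‖v‖) :=
    calc ‖y * ((x - y)ᵀ * v + vᵀ * (x - y))‖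
        = ‖(x - y)ᵀ * v + vᵀ * (x - y)‖ :=
        frobenius_norm_mul_of_conjTranspose_mul_self_eq_one
          (conjTranspose_mul_self_of_mem_Stiefel hy) _
      _ ≤ 2 * ‖(x - y)ᵀ * v‖ :=
        frobenius_norm_transpose_mul_add_transpose_mul_le (x - y) v
      _ ≤ 2 * (‖x - y‖ * ‖v‖) := by
        rw [← Matrix.frobenius_norm_transpose (x - y)]
        gcongr
        exact Matrix.frobenius_norm_mul _ _
  rw [Tproj_sub_Tproj_left, norm_neg, norm_smul, Real.norm_of_nonneg (by norm_num)]
  linarith [norm_add_le_of_le left_le right_le]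

theorem norm_Tproj_sub_Tproj_le (hx : x ∈ Stiefel d r) (hy : y ∈ Stiefel d r)
    (v w : Matrix (Fin d) (Fin r) ℝ) :
    ‖Tproj x v - Tproj y w‖ ≤ ‖v - w‖ + 2 * ‖w‖ * ‖x - y‖ :=
  calc ‖Tproj x v - Tproj y w‖
      = ‖Tproj x (v - w) + (Tproj x w - Tproj y w)‖ := by rw [Tproj_sub, sub_add_sub_cancel]
    _ ≤ ‖v - w‖ + 2 * ‖w‖ * ‖x - y‖ :=
      norm_add_le_of_le (norm_Tproj_le hx _) (norm_Tproj_sub_Tproj_left_le hx hy w)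

end TangentProjection

theorem stmt0_general {d r : ℕ} (L Lf : ℝ)
    (f : Matrix (Fin d) (Fin r) ℝ → ℝ)
    (nablaf : Matrix (Fin d) (Fin r) ℝ → Matrix (Fin d) (Fin r) ℝ)
    (hdiff : ∀ x ∈ Stiefel d r, DifferentiableAt ℝ f x)
    (hgrad : ∀ x ∈ Stiefel d r, ∀ v, fderiv ℝ f x v = Matrix.trace ((nablaf x).transpose * v))
    (hLip : ∀ x ∈ Stiefel d r, ∀ y ∈ Stiefel d r, ‖nablaf x - nablaf y‖ ≤ L * ‖x - y‖)
    (hbd : ∀ x ∈ Stiefel d r, ‖nablaf x‖ ≤ Lf) :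
    ∀ x ∈ Stiefel d r, ∀ y ∈ Stiefel d r,
      ‖Tproj x (nablaf x) - Tproj y (nablaf y)‖ ≤ (L + 2 * Lf) * ‖x - y‖ := by
  intro x hx y hy
  calc ‖Tproj x (nablaf x) - Tproj y (nablaf y)‖
      ≤ ‖nablaf x - nablaf y‖ + 2 * ‖nablaf y‖ * ‖x - y‖ := norm_Tproj_sub_Tproj_le hx hy _ _
    _ ≤ L * ‖x - y‖ + 2 * Lf * ‖x - y‖ := by
      gcongr
      exacts [hLip x hx y hy, hbd y hy]
    _ = (L + 2 * Lf) * ‖x - y‖ := by ring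

/-- Lipschitz-type inequality for the Riemannian gradient on the Stiefel
manifold. If `f` is differentiable with Euclidean (Frobenius) gradient `∇f` that is
`L`-Lipschitz, and `‖∇f(x)‖ ≤ L_f` on `St(d,r)`, then with `L_g = L + 2L_f` the Riemannian
gradient `grad f(x) = P_{T_x}(∇f(x))` satisfies
`‖grad f(x) - grad f(y)‖ ≤ L_g ‖x - y‖` for all `x, y ∈ St(d,r)`. -/
theorem stmt0 {d r : ℕ} (L Lf : ℝ)
    (f : Matrix (Fin d) (Fin r) ℝ → ℝ)
    (nablaf : Matrix (Fin d) (Fin r) ℝ → Matrix (Fin d) (Fin r) ℝ)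
    (hdiff : Differentiable ℝ f)
    (hgrad : ∀ x v, fderiv ℝ f x v = Matrix.trace ((nablaf x).transpose * v))
    (hLip : ∀ x y, ‖nablaf x - nablaf y‖ ≤ L * ‖x - y‖)
    (hbd : ∀ x ∈ Stiefel d r, ‖nablaf x‖ ≤ Lf) :
    ∀ x ∈ Stiefel d r, ∀ y ∈ Stiefel d r,
      ‖Tproj x (nablaf x) - Tproj y (nablaf y)‖ ≤ (L + 2 * Lf) * ‖x - y‖ :=
  stmt0_general L Lf f nablaf (fun x _ => hdiff x) (fun x _ => hgrad x)
    (fun x _ y _ => hLip x y) hbd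
end

section
/- For all x, y ∈ St(d,r) and every v ∈ ℝ^{d×r}, the tangent-space projections at x and y satisfy ‖P_{T_x}(v) − P_{T_y}(v)‖ ≤ 2‖x − y‖·‖v‖. -/
open scoped RealInnerProductSpace

attribute [local instance] Matrix.frobeniusNormedAddCommGroup Matrix.frobeniusNormedSpace

/-!
`S x = xᵀv + vᵀx` is linear in `x`, and `P_{T_x}(v) = v - ½ x S(x)`, so

  `P_{T_x}(v) - P_{T_y}(v) = ½ (y S(y - x) + (y - x) S(x))`.

By `‖AB‖_F ≤ |A|₂ ‖B‖_F`, with `|·|₂` the operator norm, the two products are at most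
`2 |y|₂ ‖x - y‖_F ‖v‖_F` and `2 |x|₂ ‖x - y‖_F ‖v‖_F`, and points of the Stiefel manifold have
operator norm at most `1`.
-/

open Matrix

section FrobeniusNorm

variable {m n α : Type*} [Fintype m] [Fintype n] [NormedAddCommGroup α]

theorem frobenius_norm_sq_eq_sum_norm_col_sq (A : Matrix m n α) :
    ‖A‖ ^ 2 = ∑ j, ‖WithLp.toLp 2 (A.col j)‖ ^ 2 := by
  have sum_nonneg : 0 ≤ ∑ i, ∑ j, ‖A i j‖ ^ (2 : ℝ) := by positivity
  rw [frobenius_norm_def, ← Real.sqrt_eq_rpow, Real.sq_sqrt sum_nonneg, Finset.sum_comm]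
  simp only [Real.rpow_ofNat, PiLp.norm_sq_eq_of_L2, col_apply]

theorem frobenius_norm_add_conjTranspose_le [StarAddMonoid α] [NormedStarGroup α]
    (A : Matrix n n α) : ‖A + Aᴴ‖ ≤ 2 * ‖A‖ :=
  calc ‖A + Aᴴ‖ ≤ ‖A‖ + ‖Aᴴ‖ := norm_add_le _ _
    _ = 2 * ‖A‖ := by rw [frobenius_norm_conjTranspose, two_mul]

end FrobeniusNorm

section L2OpNorm

variable {𝕜 l m n : Type*} [RCLike 𝕜] [Fintype l] [Fintype m] [Fintype n] [DecidableEq n]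

/-- The `ℓ²` operator norm of a matrix, i.e. its largest singular value. It is a plain function
rather than the norm of `Matrix.Norms.L2Operator` because `‖·‖` is the Frobenius norm here. -/
noncomputable def l2OpNorm (A : Matrix m n 𝕜) : ℝ :=
  ‖(toEuclideanLin A).toContinuousLinearMap‖

theorem l2OpNorm_nonneg (A : Matrix m n 𝕜) : 0 ≤ l2OpNorm A :=
  norm_nonneg _

theorem l2OpNorm_conjTranspose [DecidableEq m] (A : Matrix m n 𝕜) : l2OpNorm Aᴴ = l2OpNorm A :=
  l2_opNorm_conjTranspose A

theorem l2OpNorm_conjTranspose_mul_self (A : Matrix m n 𝕜) :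
    l2OpNorm (Aᴴ * A) = l2OpNorm A ^ 2 :=
  (l2_opNorm_conjTranspose_mul_self A).trans (sq _).symm

theorem l2OpNorm_one_le : l2OpNorm (1 : Matrix n n 𝕜) ≤ 1 := by
  change ‖toEuclideanCLM (n := n) (𝕜 := 𝕜) 1‖ ≤ 1
  rw [map_one]
  exact ContinuousLinearMap.norm_id_le

theorem l2OpNorm_le_one_of_conjTranspose_mul_self_eq_one {A : Matrix m n 𝕜} (hA : Aᴴ * A = 1) :
    l2OpNorm A ≤ 1 := by
  have sq_le_one : l2OpNorm A ^ 2 ≤ 1 := by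
    rw [← l2OpNorm_conjTranspose_mul_self, hA]
    exact l2OpNorm_one_le
  exact (sq_le_one_iff₀ (l2OpNorm_nonneg A)).mp sq_le_one

theorem norm_toLp_mulVec_le (A : Matrix m n 𝕜) (u : n → 𝕜) :
    ‖WithLp.toLp 2 (A *ᵥ u)‖ ≤ l2OpNorm A * ‖WithLp.toLp 2 u‖ :=
  (toEuclideanLin A).toContinuousLinearMap.le_opNorm (WithLp.toLp 2 u)

theorem frobenius_norm_mul_le_l2OpNorm_mul (A : Matrix m n 𝕜) (B : Matrix n l 𝕜) :
    ‖A * B‖ ≤ l2OpNorm A * ‖B‖ := by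
  refine le_of_sq_le_sq ?_ (mul_nonneg (l2OpNorm_nonneg A) (norm_nonneg B))
  calc ‖A * B‖ ^ 2 = ∑ j, ‖WithLp.toLp 2 (A *ᵥ B.col j)‖ ^ 2 :=
        frobenius_norm_sq_eq_sum_norm_col_sq (A * B)
    _ ≤ ∑ j, (l2OpNorm A * ‖WithLp.toLp 2 (B.col j)‖) ^ 2 := by
        gcongr with j
        exact norm_toLp_mulVec_le A (B.col j)
    _ = (l2OpNorm A * ‖B‖) ^ 2 := by
        simp only [mul_pow, ← Finset.mul_sum, frobenius_norm_sq_eq_sum_norm_col_sq B]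

end L2OpNorm

section GramDeriv

variable {𝕜 m n : Type*} [RCLike 𝕜] [Fintype m]

/-- The derivative `xᴴv + vᴴx` of the Gram matrix `x ↦ xᴴx` at `x` in the direction `v`. It
vanishes on the tangent vectors of the Stiefel manifold at `x`, so `Tproj x v` measures through it
how far `v` is from being tangent. -/
def gramDeriv (x v : Matrix m n 𝕜) : Matrix n n 𝕜 :=
  xᴴ * v + vᴴ * x

theorem gramDeriv_sub_left (x y v : Matrix m n 𝕜) :
    gramDeriv (x - y) v = gramDeriv x v - gramDeriv y v := by
  simp only [gramDeriv, conjTranspose_sub, Matrix.sub_mul, Matrix.mul_sub]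
  abel

variable [Fintype n]

theorem frobenius_norm_gramDeriv_le (x v : Matrix m n 𝕜) :
    ‖gramDeriv x v‖ ≤ 2 * ‖xᴴ * v‖ := by
  simpa only [gramDeriv, conjTranspose_mul, conjTranspose_conjTranspose] using
    frobenius_norm_add_conjTranspose_le (xᴴ * v)

theorem frobenius_norm_gramDeriv_le_norm_mul_norm (x v : Matrix m n 𝕜) :
    ‖gramDeriv x v‖ ≤ 2 * (‖x‖ * ‖v‖) := by
  grw [frobenius_norm_gramDeriv_le, frobenius_norm_mul, frobenius_norm_conjTranspose]

theorem frobenius_norm_gramDeriv_le_l2OpNorm_mul_norm [DecidableEq n] (x v : Matrix m n 𝕜) :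
    ‖gramDeriv x v‖ ≤ 2 * (l2OpNorm x * ‖v‖) := by
  classical
  grw [frobenius_norm_gramDeriv_le, frobenius_norm_mul_le_l2OpNorm_mul, l2OpNorm_conjTranspose]

end GramDeriv

section TangentProjection

variable {d r : ℕ}

theorem l2OpNorm_le_one_of_mem_Stiefel {x : Matrix (Fin d) (Fin r) ℝ} (hx : x ∈ Stiefel d r) :
    l2OpNorm x ≤ 1 :=
  l2OpNorm_le_one_of_conjTranspose_mul_self_eq_one <|
    x.conjTranspose_eq_transpose_of_trivial ▸ hx

theorem Tproj_eq_sub_mul_gramDeriv (x v : Matrix (Fin d) (Fin r) ℝ) :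
    Tproj x v = v - (1 / 2 : ℝ) • (x * gramDeriv x v) := by
  simp only [Tproj, gramDeriv, conjTranspose_eq_transpose_of_trivial]

theorem Tproj_sub_Tproj (x y v : Matrix (Fin d) (Fin r) ℝ) :
    Tproj x v - Tproj y v =
      (1 / 2 : ℝ) • (y * gramDeriv (y - x) v + (y - x) * gramDeriv x v) := by
  simp only [Tproj_eq_sub_mul_gramDeriv, gramDeriv_sub_left, sub_sub_sub_cancel_left, ← smul_sub,
    Matrix.mul_sub, Matrix.sub_mul, sub_add_sub_cancel]

theorem stmt1_general (x y v : Matrix (Fin d) (Fin r) ℝ) :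
    ‖Tproj x v - Tproj y v‖ ≤ (l2OpNorm x + l2OpNorm y) * ‖x - y‖ * ‖v‖ := by
  have norm_mul_gramDeriv_sub_le :
      ‖y * gramDeriv (y - x) v‖ ≤ l2OpNorm y * (2 * (‖x - y‖ * ‖v‖)) := by
    have l2OpNorm_y_nonneg := l2OpNorm_nonneg y
    grw [frobenius_norm_mul_le_l2OpNorm_mul, frobenius_norm_gramDeriv_le_norm_mul_norm,
      norm_sub_rev y x]
  have norm_sub_mul_gramDeriv_le :
      ‖(y - x) * gramDeriv x v‖ ≤ ‖x - y‖ * (2 * (l2OpNorm x * ‖v‖)) := by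
    grw [frobenius_norm_mul, frobenius_norm_gramDeriv_le_l2OpNorm_mul_norm, norm_sub_rev y x]
  calc ‖Tproj x v - Tproj y v‖
      = 1 / 2 * ‖y * gramDeriv (y - x) v + (y - x) * gramDeriv x v‖ := by
        rw [Tproj_sub_Tproj, norm_smul, Real.norm_of_nonneg one_half_pos.le]
    _ ≤ 1 / 2 * (l2OpNorm y * (2 * (‖x - y‖ * ‖v‖)) + ‖x - y‖ * (2 * (l2OpNorm x * ‖v‖))) := by
        grw [norm_add_le, norm_mul_gramDeriv_sub_le, norm_sub_mul_gramDeriv_le]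
    _ = (l2OpNorm x + l2OpNorm y) * ‖x - y‖ * ‖v‖ := by ring

end TangentProjection

/-- For all `x, y ∈ St(d,r)` and every `v ∈ ℝ^{d×r}`, the tangent-space
projections at `x` and `y` satisfy `‖P_{T_x}(v) - P_{T_y}(v)‖ ≤ 2‖x - y‖·‖v‖`. -/
theorem stmt1 {d r : ℕ} :
    ∀ x ∈ Stiefel d r, ∀ y ∈ Stiefel d r, ∀ v : Matrix (Fin d) (Fin r) ℝ,
      ‖Tproj x v - Tproj y v‖ ≤ 2 * ‖x - y‖ * ‖v‖ := by
  intro x hx y hy v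
  grw [stmt1_general x y v, l2OpNorm_le_one_of_mem_Stiefel hx, l2OpNorm_le_one_of_mem_Stiefel hy,
    one_add_one_eq_two]
end

section
/- Let γ ∈ (0,1), C > 0, and let W be symmetric, doubly stochastic with nonnegative entries and second largest singular value σ₂ ∈ [0,1). Let x_{1,k},…,x_{n,k} ∈ St(d,r) with ‖x̂_k − x̄_k‖ ≤ γ/2, let η_{i,k} ∈ T_{x_{i,k}} St(d,r) (i.e. x_{i,k}ᵀη_{i,k} + η_{i,k}ᵀx_{i,k} = 0) with ‖η_{i,k}‖ ≤ C for each i, let 0 < α_k ≤ γ(1−γ)/(4C), and let t be a positive integer with √n·σ₂^t·ζ ≤ γ(1−γ)/4. Define z_{i} := ∑_{j=1}^n (W^t)_{ij} x_{j,k} + α_k η_{i,k} and let x_{i,k+1} be any nearest-point projection of z_i onto St(d,r). Then (i) dist(z_i, St(d,r)) ≤ γ for every i = 1,…,n, and (ii) ‖x̂_{k+1} − x̄_{k+1}‖ ≤ γ/2, where x̂_{k+1} = (1/n)∑_i x_{i,k+1} and x̄_{k+1} is any nearest-point projection of x̂_{k+1} onto St(d,r). -/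
open scoped RealInnerProductSpace

attribute [local instance] Matrix.frobeniusNormedAddCommGroup Matrix.frobeniusNormedSpace

/-!
The nearest-point projection onto `St(d,r)` is `1 / (1 - γ)`-Lipschitz on points at distance at
most `γ`. Indeed, rotating a nearest point `p` of `z` by `exp (t • A)` with `A` skew shows that
`z * pᵀ` is symmetric, so `z - p = p * N` with `N` symmetric. As
`pᵀ * (q - p) + (q - p)ᵀ * p = -(q - p)ᵀ * (q - p)` for `p, q ∈ St(d,r)`, such a normal vector
satisfies the proximal inequality `⟪z - p, q - p⟫ ≤ ‖z - p‖ / 2 * ‖q - p‖ ^ 2`, and adding two of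
these gives the Lipschitz bound.

On the other hand, a symmetric `W` fixing the all-ones vector contracts the orthogonal complement
of that vector by `σ₂`, so each row of `W ^ t` is within `√n * σ₂ ^ t` of the uniform weights
in `ℓ¹`. Hence every update lies within `γ * (1 - γ) / 2` of the old mean, its projection lies
within `γ / 2` of the projected old mean, and so does the mean of these projections.
-/

section InnerProductSpace

variable {E : Type*} [NormedAddCommGroup E] [InnerProductSpace ℝ E]

lemma one_sub_mul_norm_sub_le_of_inner_le {z w p q : E} {a b : ℝ}
    (hz : ⟪z - p, q - p⟫ ≤ a / 2 * ‖q - p‖ ^ 2) (hw : ⟪w - q, p - q⟫ ≤ b / 2 * ‖p - q‖ ^ 2) :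
    (1 - (a + b) / 2) * ‖p - q‖ ≤ ‖z - w‖ := by
  have expand : ‖p - q‖ ^ 2 = ⟪z - w, p - q⟫ + ⟪z - p, q - p⟫ + ⟪w - q, p - q⟫ := by
    rw [← real_inner_self_eq_norm_sq, ← neg_sub p q, inner_neg_right, ← sub_eq_add_neg,
      ← inner_sub_left, ← inner_add_left]
    congr 1
    abel
  have cauchy : ⟪z - w, p - q⟫ ≤ ‖z - w‖ * ‖p - q‖ := real_inner_le_norm _ _
  rw [norm_sub_rev q p] at hz
  have key : (1 - (a + b) / 2) * ‖p - q‖ * ‖p - q‖ ≤ ‖z - w‖ * ‖p - q‖ := by linarith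
  rcases (norm_nonneg (p - q)).eq_or_lt with h0 | hpos
  · rw [← h0, mul_zero]
    exact norm_nonneg _
  · exact le_of_mul_le_mul_right key hpos

end InnerProductSpace

section Averages

variable {ι E : Type*} [Fintype ι] [SeminormedAddCommGroup E] [NormedSpace ℝ E]

lemma norm_sum_smul_sub_sum_smul_le {a b : ι → ℝ} (hab : ∑ j, a j = ∑ j, b j) {x : ι → E}
    {c : E} {D : ℝ} (hD : ∀ j, ‖x j - c‖ ≤ D) :
    ‖∑ j, a j • x j - ∑ j, b j • x j‖ ≤ (∑ j, |a j - b j|) * D := by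
  have recenter : ∑ j, a j • x j - ∑ j, b j • x j = ∑ j, (a j - b j) • (x j - c) := by
    simp only [smul_sub, sub_smul, Finset.sum_sub_distrib, ← Finset.sum_smul, hab, sub_self,
      sub_zero]
  rw [recenter, Finset.sum_mul]
  refine norm_sum_le_of_le _ fun j _ ↦ ?_
  rw [norm_smul, Real.norm_eq_abs]
  gcongr
  exact hD j

lemma norm_inv_card_smul_sum_sub_le [Nonempty ι] {x : ι → E} {c : E} {δ : ℝ}
    (hx : ∀ i, ‖x i - c‖ ≤ δ) : ‖(Fintype.card ι : ℝ)⁻¹ • ∑ i, x i - c‖ ≤ δ := by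
  rw [← mem_closedBall_iff_norm, Finset.smul_sum]
  refine (convex_closedBall c δ).sum_mem (fun _ _ ↦ by positivity) ?_
    fun i _ ↦ mem_closedBall_iff_norm.2 (hx i)
  simp

lemma sum_abs_le_sqrt_card_mul_norm (v : EuclideanSpace ℝ ι) :
    ∑ i, |v i| ≤ √(Fintype.card ι) * ‖v‖ := by
  rw [EuclideanSpace.norm_eq, ← Real.sqrt_mul (Nat.cast_nonneg _)]
  exact Real.le_sqrt_of_sq_le (sq_sum_le_card_mul_sum_sq (s := Finset.univ))

end Averages

section Mixing

open Matrix

lemma sum_row_pow {ι R : Type*} [Fintype ι] [DecidableEq ι] [Semiring R] {A : Matrix ι ι R}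
    (hrow : ∀ i, ∑ j, A i j = 1) (t : ℕ) (i : ι) : ∑ j, (A ^ t) i j = 1 := by
  induction t with
  | zero => simp [one_apply]
  | succ t ih =>
    simp only [pow_succ, mul_apply]
    rw [Finset.sum_comm]
    simp only [← Finset.mul_sum, hrow, mul_one, ih]

variable {n : ℕ} {W : Matrix (Fin n) (Fin n) ℝ} (hW : W.IsHermitian)

lemma toEuclideanLin_eigenvectorBasis (k : Fin n) :
    toEuclideanLin W (hW.eigenvectorBasis k) = hW.eigenvalues k • hW.eigenvectorBasis k :=
  congrArg (WithLp.toLp 2) (hW.mulVec_eigenvectorBasis k)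

lemma inner_eigenvectorBasis_toEuclideanLin (k : Fin n) (v : EuclideanSpace ℝ (Fin n)) :
    ⟪hW.eigenvectorBasis k, toEuclideanLin W v⟫
      = hW.eigenvalues k * ⟪hW.eigenvectorBasis k, v⟫ := by
  rw [← isSymmetric_toEuclideanLin_iff.2 hW _ v, toEuclideanLin_eigenvectorBasis,
    real_inner_smul_left]

lemma sigma2_nonneg : 0 ≤ sigma2 W hW :=
  Real.iSup_nonneg fun _ ↦ le_min (abs_nonneg _) (abs_nonneg _)

lemma min_abs_eigenvalues_le_sigma2 {j k : Fin n} (hjk : j ≠ k) :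
    min |hW.eigenvalues j| |hW.eigenvalues k| ≤ sigma2 W hW :=
  le_ciSup (f := fun p : {p : Fin n × Fin n // p.1 ≠ p.2} ↦
    min |hW.eigenvalues p.1.1| |hW.eigenvalues p.1.2|) (Set.finite_range _).bddAbove ⟨(j, k), hjk⟩

lemma abs_eigenvalues_le_sigma2_or_inner_eq_zero (hσ : sigma2 W hW < 1)
    {u v : EuclideanSpace ℝ (Fin n)} (hu : toEuclideanLin W u = u) (hu0 : u ≠ 0)
    (huv : ⟪u, v⟫ = 0) (k : Fin n) :
    |hW.eigenvalues k| ≤ sigma2 W hW ∨ ⟪hW.eigenvectorBasis k, v⟫ = 0 := by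
  -- If `|λ k| > σ₂`, every other eigenvalue has modulus `< 1`, so `u` spans the `k`-th eigenline.
  refine or_iff_not_imp_left.2 fun hk ↦ ?_
  have inner_u_eq_zero : ∀ j ≠ k, ⟪hW.eigenvectorBasis j, u⟫ = 0 := by
    intro j hj
    have hj_lt : |hW.eigenvalues j| < 1 :=
      ((min_le_iff.1 (min_abs_eigenvalues_le_sigma2 hW hj)).resolve_right hk).trans_lt hσ
    have fixed := inner_eigenvectorBasis_toEuclideanLin hW j u
    rw [hu] at fixed
    refine (mul_left_eq_self₀.1 fixed.symm).resolve_left fun h1 ↦ ?_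
    rw [h1, abs_one] at hj_lt
    exact hj_lt.false
  have u_eq : ⟪hW.eigenvectorBasis k, u⟫ • hW.eigenvectorBasis k = u := by
    have expansion := hW.eigenvectorBasis.sum_repr' u
    rwa [Fintype.sum_eq_single k fun j hj ↦ by rw [inner_u_eq_zero j hj, zero_smul]] at expansion
  have coeff_ne_zero : ⟪hW.eigenvectorBasis k, u⟫ ≠ 0 := by
    intro h
    exact hu0 (by rw [← u_eq, h, zero_smul])
  rw [← u_eq, real_inner_smul_left] at huv
  exact (mul_eq_zero.1 huv).resolve_left coeff_ne_zero

lemma norm_toEuclideanLin_le (hσ : sigma2 W hW < 1) {u v : EuclideanSpace ℝ (Fin n)}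
    (hu : toEuclideanLin W u = u) (hu0 : u ≠ 0) (huv : ⟪u, v⟫ = 0) :
    ‖toEuclideanLin W v‖ ≤ sigma2 W hW * ‖v‖ := by
  refine le_of_sq_le_sq ?_ (mul_nonneg (sigma2_nonneg hW) (norm_nonneg v))
  rw [mul_pow, ← hW.eigenvectorBasis.sum_sq_norm_inner_right,
    ← hW.eigenvectorBasis.sum_sq_norm_inner_right v, Finset.mul_sum]
  refine Finset.sum_le_sum fun k _ ↦ ?_
  rw [inner_eigenvectorBasis_toEuclideanLin, norm_mul, mul_pow, Real.norm_eq_abs]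
  rcases abs_eigenvalues_le_sigma2_or_inner_eq_zero hW hσ hu hu0 huv k with hk | hk
  · gcongr
  · simp [hk]

lemma norm_toEuclideanLin_pow_le (hσ : sigma2 W hW < 1) {u v : EuclideanSpace ℝ (Fin n)}
    (hu : toEuclideanLin W u = u) (hu0 : u ≠ 0) (huv : ⟪u, v⟫ = 0) (t : ℕ) :
    ‖toEuclideanLin (W ^ t) v‖ ≤ sigma2 W hW ^ t * ‖v‖ := by
  induction t generalizing v with
  | zero => simp
  | succ t ih =>
    have huWv : ⟪u, toEuclideanLin W v⟫ = 0 := by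
      rw [← isSymmetric_toEuclideanLin_iff.2 hW u v, hu, huv]
    calc ‖toEuclideanLin (W ^ (t + 1)) v‖ = ‖toEuclideanLin (W ^ t) (toEuclideanLin W v)‖ := by
          rw [pow_succ, toLpLin_mul_same, LinearMap.comp_apply]
      _ ≤ sigma2 W hW ^ t * ‖toEuclideanLin W v‖ := ih huWv
      _ ≤ sigma2 W hW ^ t * (sigma2 W hW * ‖v‖) := by
          gcongr
          · exact pow_nonneg (sigma2_nonneg hW) t
          · exact norm_toEuclideanLin_le hW hσ hu hu0 huv
      _ = sigma2 W hW ^ (t + 1) * ‖v‖ := by rw [pow_succ, mul_assoc]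

lemma toEuclideanLin_one_of_sum_row {A : Matrix (Fin n) (Fin n) ℝ}
    (hrow : ∀ i, ∑ j, A i j = 1) : toEuclideanLin A (WithLp.toLp 2 1) = WithLp.toLp 2 1 := by
  ext i
  simp [mulVec, dotProduct, hrow]

/-- The basis vector `e i` minus its orthogonal projection onto the span of the all-ones vector.
A power `W ^ t` of a matrix with unit row sums maps it to the deviation of the `i`-th column of
`W ^ t` from the uniform weights. -/
noncomputable def centeredSingle {n : ℕ} (i : Fin n) : EuclideanSpace ℝ (Fin n) :=
  EuclideanSpace.single i 1 - (n : ℝ)⁻¹ • WithLp.toLp 2 1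

lemma inner_one_centeredSingle (i : Fin n) :
    ⟪(WithLp.toLp 2 1 : EuclideanSpace ℝ (Fin n)), centeredSingle i⟫ = 0 := by
  have hn : (n : ℝ) ≠ 0 := Nat.cast_ne_zero.2 i.pos.ne'
  simp [centeredSingle, inner_sub_right, PiLp.inner_apply, hn]

lemma norm_centeredSingle_le_one (i : Fin n) : ‖centeredSingle i‖ ≤ 1 := by
  have decompose : centeredSingle i + (n : ℝ)⁻¹ • WithLp.toLp 2 1 = EuclideanSpace.single i 1 :=
    sub_add_cancel _ _
  have orthogonal : ⟪centeredSingle i, (n : ℝ)⁻¹ • WithLp.toLp 2 1⟫ = 0 := by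
    rw [real_inner_smul_right, real_inner_comm, inner_one_centeredSingle, mul_zero]
  have pythagoras := norm_add_sq_eq_norm_sq_add_norm_sq_real orthogonal
  rw [decompose, PiLp.norm_single, norm_one] at pythagoras
  nlinarith [norm_nonneg (centeredSingle i),
    mul_self_nonneg ‖(n : ℝ)⁻¹ • (WithLp.toLp 2 1 : EuclideanSpace ℝ (Fin n))‖]

lemma toEuclideanLin_pow_centeredSingle_apply (hrow : ∀ i, ∑ j, W i j = 1) (t : ℕ)
    (i j : Fin n) : toEuclideanLin (W ^ t) (centeredSingle i) j = (W ^ t) j i - (n : ℝ)⁻¹ := by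
  rw [centeredSingle, map_sub, map_smul, toEuclideanLin_one_of_sum_row (sum_row_pow hrow t)]
  simp [-toLpLin_pow, -toLin'_pow]

lemma sum_abs_pow_sub_inv_le (hrow : ∀ i, ∑ j, W i j = 1) (hσ : sigma2 W hW < 1) (t : ℕ)
    (i : Fin n) : ∑ j, |(W ^ t) i j - (n : ℝ)⁻¹| ≤ √n * sigma2 W hW ^ t := by
  have one_ne_zero : (WithLp.toLp 2 1 : EuclideanSpace ℝ (Fin n)) ≠ 0 := by
    intro h
    simpa using congrArg (· i) h
  have symm_pow (j : Fin n) : (W ^ t) i j = (W ^ t) j i := ((hW.pow t).apply i j).symm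
  calc ∑ j, |(W ^ t) i j - (n : ℝ)⁻¹| = ∑ j, |toEuclideanLin (W ^ t) (centeredSingle i) j| := by
        simp only [toEuclideanLin_pow_centeredSingle_apply hrow, symm_pow]
    _ ≤ √n * ‖toEuclideanLin (W ^ t) (centeredSingle i)‖ := by
        simpa only [Fintype.card_fin] using
          sum_abs_le_sqrt_card_mul_norm (toEuclideanLin (W ^ t) (centeredSingle i))
    _ ≤ √n * (sigma2 W hW ^ t * ‖centeredSingle i‖) := by
        gcongr
        exact norm_toEuclideanLin_pow_le hW hσ (toEuclideanLin_one_of_sum_row hrow) one_ne_zero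
          (inner_one_centeredSingle i) t
    _ ≤ √n * sigma2 W hW ^ t := by
        gcongr
        exact mul_le_of_le_one_right (pow_nonneg (sigma2_nonneg hW) t)
          (norm_centeredSingle_le_one i)

lemma norm_sum_pow_smul_sub_mean_le {E : Type*} [SeminormedAddCommGroup E] [NormedSpace ℝ E]
    {S : Set E} (hS : Bornology.IsBounded S) (hrow : ∀ i, ∑ j, W i j = 1)
    (hσ : sigma2 W hW < 1) {x : Fin n → E} (hx : ∀ i, x i ∈ S) (t : ℕ) (i : Fin n) :
    ‖∑ j, (W ^ t) i j • x j - (n : ℝ)⁻¹ • ∑ j, x j‖ ≤ √n * sigma2 W hW ^ t * Metric.diam S := by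
  have hn : (n : ℝ) ≠ 0 := Nat.cast_ne_zero.2 i.pos.ne'
  have same_mass : ∑ j, (W ^ t) i j = ∑ _j : Fin n, (n : ℝ)⁻¹ := by
    simp [sum_row_pow hrow, hn]
  have le_diam (j : Fin n) : ‖x j - x i‖ ≤ Metric.diam S := by
    rw [← dist_eq_norm]
    exact Metric.dist_le_diam_of_mem hS (hx j) (hx i)
  rw [Finset.smul_sum]
  exact (norm_sum_smul_sub_sum_smul_le same_mass le_diam).trans <|
    mul_le_mul_of_nonneg_right (sum_abs_pow_sub_inv_le hW hrow hσ t i) Metric.diam_nonneg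

end Mixing

section Stiefel

open Matrix

variable {l m n : Type*} [Fintype l] [Fintype m] [Fintype n] {d r : ℕ}

/-- The Frobenius inner product `⟪A, B⟫ = tr (Aᵀ * B)` on real matrices, compatible with the
Frobenius norm. -/
noncomputable abbrev frobeniusInnerProductSpace : InnerProductSpace ℝ (Matrix m n ℝ) where
  inner A B := (Aᵀ * B).trace
  norm_sq_eq_re_inner A := by
    rw [frobenius_norm_def, ← Real.sqrt_eq_rpow, Real.sq_sqrt (by positivity), Finset.sum_comm]
    simp [trace, mul_apply, pow_two]
  conj_inner_symm A B := by
    rw [conj_trivial, ← trace_transpose, transpose_mul, transpose_transpose]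
  add_left A B C := by rw [transpose_add, Matrix.add_mul, trace_add]
  smul_left A B c := by
    rw [transpose_smul, Matrix.smul_mul, trace_smul, smul_eq_mul, conj_trivial]

attribute [local instance] frobeniusInnerProductSpace frobeniusNormedRing frobeniusNormedAlgebra

lemma frobenius_inner_def (A B : Matrix m n ℝ) : ⟪A, B⟫ = (Aᵀ * B).trace := rfl

lemma frobenius_inner_mul_right (A : Matrix l n ℝ) (B : Matrix l m ℝ) (C : Matrix m n ℝ) :
    ⟪A, B * C⟫ = ⟪A * Cᵀ, B⟫ := by
  rw [frobenius_inner_def, frobenius_inner_def, transpose_mul, transpose_transpose,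
    ← Matrix.mul_assoc, trace_mul_comm, Matrix.mul_assoc]

lemma isSymm_of_forall_inner_skew_eq_zero {M : Matrix n n ℝ}
    (hM : ∀ A : Matrix n n ℝ, Aᵀ = -A → ⟪M, A⟫ = 0) : M.IsSymm := by
  have skew : (M - Mᵀ)ᵀ = -(M - Mᵀ) := by rw [transpose_sub, transpose_transpose, neg_sub]
  have transpose_inner : ⟪Mᵀ, M - Mᵀ⟫ = -⟪M, M - Mᵀ⟫ := by
    rw [frobenius_inner_def, frobenius_inner_def, ← trace_transpose, transpose_mul, skew,
      Matrix.neg_mul, trace_neg, trace_mul_comm, transpose_transpose]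
  have self_inner : ⟪M - Mᵀ, M - Mᵀ⟫ = 0 := by
    rw [inner_sub_left, transpose_inner, hM _ skew, neg_zero, sub_zero]
  exact (sub_eq_zero.1 (inner_self_eq_zero.1 self_inner)).symm

lemma Stiefel.transpose_mul_self {p : Matrix (Fin d) (Fin r) ℝ} (hp : p ∈ Stiefel d r) :
    pᵀ * p = 1 :=
  hp

lemma Stiefel.norm_mul {p : Matrix (Fin d) (Fin r) ℝ}
    (hp : p ∈ Stiefel d r) (N : Matrix (Fin r) m ℝ) : ‖p * N‖ = ‖N‖ := by
  rw [@norm_eq_sqrt_real_inner _ _ _ (p * N), @norm_eq_sqrt_real_inner _ _ _ N,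
    frobenius_inner_def, frobenius_inner_def, transpose_mul, Matrix.mul_assoc,
    ← Matrix.mul_assoc pᵀ, Stiefel.transpose_mul_self hp, Matrix.one_mul]

lemma Stiefel.norm_eq {p : Matrix (Fin d) (Fin r) ℝ} (hp : p ∈ Stiefel d r) : ‖p‖ = √r := by
  rw [norm_eq_sqrt_real_inner, frobenius_inner_def, Stiefel.transpose_mul_self hp, trace_one,
    Fintype.card_fin]

variable (d r) in
lemma Stiefel.isBounded : Bornology.IsBounded (Stiefel d r) :=
  isBounded_iff_forall_norm_le.2 ⟨√r, fun _ hp ↦ (Stiefel.norm_eq hp).le⟩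

lemma Stiefel.exp_mul_mem {A : Matrix (Fin d) (Fin d) ℝ} (hA : Aᵀ = -A)
    {p : Matrix (Fin d) (Fin r) ℝ} (hp : p ∈ Stiefel d r) :
    NormedSpace.exp A * p ∈ Stiefel d r := by
  have orthogonal : (NormedSpace.exp A)ᵀ * NormedSpace.exp A = 1 := by
    rw [← exp_transpose, hA, exp_neg,
      nonsing_inv_mul _ ((isUnit_iff_isUnit_det _).1 (isUnit_exp A))]
  change (NormedSpace.exp A * p)ᵀ * (NormedSpace.exp A * p) = 1
  rw [transpose_mul, Matrix.mul_assoc, ← Matrix.mul_assoc _ _ p, orthogonal,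
    Matrix.one_mul, Stiefel.transpose_mul_self hp]

lemma Stiefel.inner_mul_sub {p q : Matrix (Fin d) (Fin r) ℝ} (hp : p ∈ Stiefel d r)
    (hq : q ∈ Stiefel d r) {N : Matrix (Fin r) (Fin r) ℝ} (hN : N.IsSymm) :
    ⟪p * N, q - p⟫ = -(⟪(q - p) * N, q - p⟫ / 2) := by
  have swap : (N * (qᵀ * p)).trace = (N * (pᵀ * q)).trace := by
    rw [← trace_transpose, transpose_mul, hN.eq, trace_mul_comm, transpose_mul,
      transpose_transpose]
  simp only [frobenius_inner_def, transpose_mul, transpose_sub, hN.eq, Matrix.mul_assoc,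
    Matrix.sub_mul, Matrix.mul_sub, Stiefel.transpose_mul_self hp,
    Stiefel.transpose_mul_self hq, trace_sub, swap]
  ring

namespace IsNearestPoint

variable {z p q : Matrix (Fin d) (Fin r) ℝ}

lemma inner_le (h : IsNearestPoint (Stiefel d r) z p) (hq : q ∈ Stiefel d r) :
    ⟪z, q⟫ ≤ ⟪z, p⟫ := by
  have h_sq : ‖z - p‖ ^ 2 ≤ ‖z - q‖ ^ 2 := by
    gcongr
    exact h.2 q hq
  rw [norm_sub_sq_real, norm_sub_sq_real, Stiefel.norm_eq h.1, Stiefel.norm_eq hq] at h_sq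
  linarith

lemma inner_mul_transpose_eq_zero (h : IsNearestPoint (Stiefel d r) z p)
    {A : Matrix (Fin d) (Fin d) ℝ} (hA : Aᵀ = -A) : ⟪z * pᵀ, A⟫ = 0 := by
  let f : ℝ → ℝ := fun t ↦ ⟪z * pᵀ, NormedSpace.exp (t • A)⟫
  have exp_deriv := hasDerivAt_exp_smul_const A (0 : ℝ)
  rw [zero_smul, NormedSpace.exp_zero, one_mul] at exp_deriv
  have f_deriv : HasDerivAt f ⟪z * pᵀ, A⟫ 0 :=
    (innerSL ℝ (z * pᵀ)).hasFDerivAt.comp_hasDerivAt 0 exp_deriv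
  have f_le (t : ℝ) : f t ≤ f 0 := by
    have skew : (t • A)ᵀ = -(t • A) := by rw [transpose_smul, hA, smul_neg]
    simpa [f, ← frobenius_inner_mul_right] using h.inner_le (Stiefel.exp_mul_mem skew h.1)
  exact IsLocalMax.hasDerivAt_eq_zero (Filter.Eventually.of_forall f_le) f_deriv

lemma exists_isSymm_sub_eq_mul (h : IsNearestPoint (Stiefel d r) z p) :
    ∃ N : Matrix (Fin r) (Fin r) ℝ, N.IsSymm ∧ z - p = p * N := by
  have hp := Stiefel.transpose_mul_self h.1
  have symm : p * zᵀ = z * pᵀ := by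
    rw [← (isSymm_of_forall_inner_skew_eq_zero fun A ↦ h.inner_mul_transpose_eq_zero (A := A)).eq,
      transpose_mul, transpose_transpose]
  have symm' : zᵀ * p = pᵀ * z :=
    calc zᵀ * p = pᵀ * (p * zᵀ) * p := by
          rw [← Matrix.mul_assoc, hp, Matrix.one_mul]
      _ = pᵀ * z := by rw [symm, Matrix.mul_assoc, Matrix.mul_assoc, hp, Matrix.mul_one]
  refine ⟨zᵀ * p - 1, ?_, ?_⟩
  · rw [IsSymm, transpose_sub, transpose_mul, transpose_transpose, transpose_one, symm']
  · rw [Matrix.mul_sub, ← Matrix.mul_assoc, symm, Matrix.mul_assoc, hp, Matrix.mul_one,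
      Matrix.mul_one]

lemma inner_sub_le (h : IsNearestPoint (Stiefel d r) z p) (hq : q ∈ Stiefel d r) :
    ⟪z - p, q - p⟫ ≤ ‖z - p‖ / 2 * ‖q - p‖ ^ 2 := by
  obtain ⟨N, hN, hz⟩ := h.exists_isSymm_sub_eq_mul
  calc ⟪z - p, q - p⟫ = -(⟪(q - p) * N, q - p⟫ / 2) := by
        rw [hz, Stiefel.inner_mul_sub h.1 hq hN]
    _ ≤ ‖(q - p) * N‖ * ‖q - p‖ / 2 := by
        linarith [neg_abs_le ⟪(q - p) * N, q - p⟫,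
          abs_real_inner_le_norm ((q - p) * N) (q - p)]
    _ ≤ ‖q - p‖ * ‖N‖ * ‖q - p‖ / 2 := by
        gcongr
        exact frobenius_norm_mul _ _
    _ = ‖z - p‖ / 2 * ‖q - p‖ ^ 2 := by
        rw [hz, Stiefel.norm_mul h.1]
        ring

lemma one_sub_mul_norm_sub_le {w : Matrix (Fin d) (Fin r) ℝ} {a b : ℝ}
    (hz : IsNearestPoint (Stiefel d r) z p) (hw : IsNearestPoint (Stiefel d r) w q)
    (hzp : ‖z - p‖ ≤ a) (hwq : ‖w - q‖ ≤ b) :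
    (1 - (a + b) / 2) * ‖p - q‖ ≤ ‖z - w‖ :=
  one_sub_mul_norm_sub_le_of_inner_le ((hz.inner_sub_le hw.1).trans (by gcongr))
    ((hw.inner_sub_le hz.1).trans (by gcongr))

end IsNearestPoint

end Stiefel

theorem stmt3_general {d r n : ℕ} {γ C : ℝ} (hγ : γ < 1) (hC : 0 < C)
    {W : Matrix (Fin n) (Fin n) ℝ} (hW : W.IsHermitian)
    (hrow : ∀ i, ∑ j, W i j = 1) (hσ : sigma2 W hW < 1)
    {x : Fin n → Matrix (Fin d) (Fin r) ℝ} (hx : ∀ i, x i ∈ Stiefel d r)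
    {xbar : Matrix (Fin d) (Fin r) ℝ}
    (hxbar : IsNearestPoint (Stiefel d r) ((n : ℝ)⁻¹ • ∑ i, x i) xbar)
    (hcons : ‖(n : ℝ)⁻¹ • ∑ i, x i - xbar‖ ≤ γ / 2)
    {η : Fin n → Matrix (Fin d) (Fin r) ℝ} (hηC : ∀ i, ‖η i‖ ≤ C)
    {α : ℝ} (hα0 : 0 ≤ α) (hα : α ≤ γ * (1 - γ) / (4 * C)) {t : ℕ}
    (hmix : √n * sigma2 W hW ^ t * Metric.diam (Stiefel d r) ≤ γ * (1 - γ) / 4)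
    {x' : Fin n → Matrix (Fin d) (Fin r) ℝ}
    (hx' : ∀ i, IsNearestPoint (Stiefel d r) (∑ j, (W ^ t) i j • x j + α • η i) (x' i)) :
    (∀ i, Metric.infDist (∑ j, (W ^ t) i j • x j + α • η i) (Stiefel d r) ≤ γ) ∧
      ∀ xbar', IsNearestPoint (Stiefel d r) ((n : ℝ)⁻¹ • ∑ i, x' i) xbar' →
        ‖(n : ℝ)⁻¹ • ∑ i, x' i - xbar'‖ ≤ γ / 2 := by
  have hαC : α * C ≤ γ * (1 - γ) / 4 := by
    rw [le_div_iff₀ (by positivity)] at hα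
    linarith
  have hγ0 : 0 ≤ γ := by linarith [norm_nonneg ((n : ℝ)⁻¹ • ∑ i, x i - xbar)]
  have near_mean (i : Fin n) :
      ‖∑ j, (W ^ t) i j • x j + α • η i - (n : ℝ)⁻¹ • ∑ j, x j‖ ≤ γ * (1 - γ) / 2 := by
    have mix := norm_sum_pow_smul_sub_mean_le hW (Stiefel.isBounded d r) hrow hσ hx t i
    have step : ‖α • η i‖ ≤ α * C := by
      rw [norm_smul, Real.norm_of_nonneg hα0]
      gcongr
      exact hηC i
    rw [add_sub_right_comm]
    linarith [norm_add_le_of_le mix step]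
  have near_xbar (i : Fin n) : ‖∑ j, (W ^ t) i j • x j + α • η i - xbar‖ ≤ γ := by
    have := norm_sub_le_norm_sub_add_norm_sub (∑ j, (W ^ t) i j • x j + α • η i)
      ((n : ℝ)⁻¹ • ∑ j, x j) xbar
    linarith [near_mean i, sq_nonneg γ]
  refine ⟨fun i ↦ ?_, fun xbar' hxbar' ↦ (hxbar'.2 xbar hxbar.1).trans ?_⟩
  · exact (Metric.infDist_le_dist_of_mem hxbar.1).trans ((dist_eq_norm _ _).trans_le (near_xbar i))
  · rcases n.eq_zero_or_pos with rfl | hn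
    · simpa using hcons
    have : Nonempty (Fin n) := ⟨⟨0, hn⟩⟩
    have near_proj (i : Fin n) : ‖x' i - xbar‖ ≤ γ / 2 := by
      have proj_le : ‖(∑ j, (W ^ t) i j • x j + α • η i) - x' i‖ ≤ γ :=
        ((hx' i).2 xbar hxbar.1).trans (near_xbar i)
      have lip := (hx' i).one_sub_mul_norm_sub_le hxbar proj_le (hcons.trans (half_le_self hγ0))
      rw [add_self_div_two] at lip
      refine le_of_mul_le_mul_left (lip.trans ?_) (sub_pos.2 hγ)
      linarith [near_mean i]
    simpa only [Fintype.card_fin] using norm_inv_card_smul_sum_sub_le near_proj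

/-- one step of the decentralized update stays in the tube and keeps the
consensus error small. -/
theorem stmt3 {d r n : ℕ} (γ C : ℝ) (hγ : γ ∈ Set.Ioo (0 : ℝ) 1) (hC : 0 < C)
    (W : Matrix (Fin n) (Fin n) ℝ) (hW : W.IsHermitian)
    (hnn : ∀ i j, 0 ≤ W i j)
    (hrow : ∀ i, ∑ j, W i j = 1) (hcol : ∀ j, ∑ i, W i j = 1)
    (hσ : sigma2 W hW ∈ Set.Ico (0 : ℝ) 1)
    (x : Fin n → Matrix (Fin d) (Fin r) ℝ) (hx : ∀ i, x i ∈ Stiefel d r)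
    (xbar : Matrix (Fin d) (Fin r) ℝ)
    (hxbar : IsNearestPoint (Stiefel d r) ((n : ℝ)⁻¹ • ∑ i, x i) xbar)
    (hcons : ‖(n : ℝ)⁻¹ • ∑ i, x i - xbar‖ ≤ γ / 2)
    (η : Fin n → Matrix (Fin d) (Fin r) ℝ)
    (hηtan : ∀ i, (x i).transpose * η i + (η i).transpose * x i = 0)
    (hηC : ∀ i, ‖η i‖ ≤ C)
    (α : ℝ) (hα0 : 0 < α) (hα : α ≤ γ * (1 - γ) / (4 * C))
    (t : ℕ) (ht : 0 < t)
    (hmix : Real.sqrt n * sigma2 W hW ^ t * Metric.diam (Stiefel d r) ≤ γ * (1 - γ) / 4)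
    (x' : Fin n → Matrix (Fin d) (Fin r) ℝ)
    (hx' : ∀ i, IsNearestPoint (Stiefel d r)
      (∑ j, (W ^ t) i j • x j + α • η i) (x' i)) :
    (∀ i, Metric.infDist (∑ j, (W ^ t) i j • x j + α • η i) (Stiefel d r) ≤ γ) ∧
      ∀ xbar', IsNearestPoint (Stiefel d r) ((n : ℝ)⁻¹ • ∑ i, x' i) xbar' →
        ‖(n : ℝ)⁻¹ • ∑ i, x' i - xbar'‖ ≤ γ / 2 := by
  exact stmt3_general hγ.2 hC hW hrow hσ.2 hx hxbar hcons hηC hα0.le hα hmix hx'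
end

section
/- (Descent property of the decentralized Fletcher–Reeves directions.) Let 0 < c₂ < 1/2 and suppose g_k ≠ 0 for all k ≥ 0, η_0 = −g_0, η_{k+1} = −g_{k+1} + β_{k+1} v_k with β_{k+1} = ‖g_{k+1}‖²/‖g_k‖², and for every k ≥ 0 the inequality |⟨g_{k+1}, v_k⟩| ≤ c₂ |⟨g_k, η_k⟩| holds. Then for all k ≥ 0, each η_k is a descent direction and −1/(1−c₂) ≤ ⟨g_k, η_k⟩/‖g_k‖² ≤ −(1−2c₂)/(1−c₂). -/
open scoped RealInnerProductSpace

/-!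
The normalized slope `r k = ⟪g k, η k⟫ / ‖g k‖ ^ 2` starts at `-1`, and `r (k + 1) + 1` is
`β (k + 1) * ⟪g (k + 1), v k⟫ / ‖g (k + 1)‖ ^ 2`. The Fletcher–Reeves coefficient cancels
`‖g (k + 1)‖ ^ 2`, so the Wolfe bound becomes `|r (k + 1) + 1| ≤ c₂ * |r k|`. The interval around
`-1` of radius `ρ = c₂ / (1 - c₂)`, the solution of `ρ = c₂ * (1 + ρ)`, is invariant under this
recursion, and its endpoints are the two claimed bounds.
-/

theorem norm_sub_le_of_norm_succ_sub_le {E : Type*} [SeminormedAddCommGroup E] {c : ℝ}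
    (hc₀ : 0 ≤ c) (hc₁ : c < 1) {u : ℕ → E} {a : E} (h₀ : ‖u 0 - a‖ ≤ c / (1 - c) * ‖a‖)
    (hu : ∀ k, ‖u (k + 1) - a‖ ≤ c * ‖u k‖) (k : ℕ) :
    ‖u k - a‖ ≤ c / (1 - c) * ‖a‖ := by
  induction k with
  | zero => exact h₀
  | succ k ih =>
    have hc : 1 - c ≠ 0 := (sub_pos.mpr hc₁).ne'
    calc ‖u (k + 1) - a‖ ≤ c * ‖u k‖ := hu k
      _ ≤ c * (‖a‖ + ‖u k - a‖) := by gcongr; exact norm_le_norm_add_norm_sub' (u k) a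
      _ ≤ c * (‖a‖ + c / (1 - c) * ‖a‖) := by gcongr
      _ = c / (1 - c) * ‖a‖ := by field_simp; ring

section InnerProductSpace

variable {H : Type*} [NormedAddCommGroup H] [InnerProductSpace ℝ H]

theorem inner_neg_add_smul_div_norm_sq_add_one {x : H} (hx : x ≠ 0) (b : ℝ) (w : H) :
    ⟪x, -x + b • w⟫ / ‖x‖ ^ 2 + 1 = b * ⟪x, w⟫ / ‖x‖ ^ 2 := by
  have hx' : ‖x‖ ≠ 0 := norm_ne_zero_iff.mpr hx
  rw [inner_add_right, inner_neg_right, real_inner_self_eq_norm_sq, inner_smul_right]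
  field_simp
  ring

theorem abs_inner_neg_add_smul_div_norm_sq_add_one_le {x y : H} (hx : x ≠ 0) {b : ℝ}
    (hb : |b| ≤ ‖x‖ ^ 2 / ‖y‖ ^ 2) (w : H) :
    |⟪x, -x + b • w⟫ / ‖x‖ ^ 2 + 1| ≤ |⟪x, w⟫| / ‖y‖ ^ 2 := by
  have hx' : ‖x‖ ≠ 0 := norm_ne_zero_iff.mpr hx
  calc |⟪x, -x + b • w⟫ / ‖x‖ ^ 2 + 1| = |b| * |⟪x, w⟫| / ‖x‖ ^ 2 := by
        rw [inner_neg_add_smul_div_norm_sq_add_one hx, abs_div, abs_mul, abs_sq]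
    _ ≤ ‖x‖ ^ 2 / ‖y‖ ^ 2 * |⟪x, w⟫| / ‖x‖ ^ 2 := by gcongr
    _ = |⟪x, w⟫| / ‖y‖ ^ 2 := by field_simp

theorem abs_inner_div_norm_sq_add_one_le_of_abs_coeff_le {c : ℝ} (hc₀ : 0 ≤ c) (hc₁ : c < 1)
    {g η v : ℕ → H} {β : ℕ → ℝ} (hg : ∀ k, g k ≠ 0) (hη₀ : η 0 = -g 0)
    (hrec : ∀ k, η (k + 1) = -g (k + 1) + β (k + 1) • v k)
    (hβ : ∀ k, |β (k + 1)| ≤ ‖g (k + 1)‖ ^ 2 / ‖g k‖ ^ 2)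
    (hwolfe : ∀ k, |⟪g (k + 1), v k⟫| ≤ c * |⟪g k, η k⟫|) (k : ℕ) :
    |⟪g k, η k⟫ / ‖g k‖ ^ 2 + 1| ≤ c / (1 - c) := by
  have initial : ⟪g 0, η 0⟫ / ‖g 0‖ ^ 2 + 1 = 0 := by
    simpa [hη₀] using inner_neg_add_smul_div_norm_sq_add_one (hg 0) 0 0
  have step (k : ℕ) :
      |⟪g (k + 1), η (k + 1)⟫ / ‖g (k + 1)‖ ^ 2 + 1| ≤ c * |⟪g k, η k⟫ / ‖g k‖ ^ 2| :=
    calc |⟪g (k + 1), η (k + 1)⟫ / ‖g (k + 1)‖ ^ 2 + 1| ≤ |⟪g (k + 1), v k⟫| / ‖g k‖ ^ 2 := by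
          rw [hrec]
          exact abs_inner_neg_add_smul_div_norm_sq_add_one_le (hg (k + 1)) (hβ k) (v k)
      _ ≤ c * |⟪g k, η k⟫| / ‖g k‖ ^ 2 := by gcongr; exact hwolfe k
      _ = c * |⟪g k, η k⟫ / ‖g k‖ ^ 2| := by rw [abs_div, abs_sq, mul_div_assoc]
  have radius_nonneg : 0 ≤ c / (1 - c) := div_nonneg hc₀ (sub_pos.mpr hc₁).le
  simpa using norm_sub_le_of_norm_succ_sub_le (u := fun k ↦ ⟪g k, η k⟫ / ‖g k‖ ^ 2) (a := -1)
    hc₀ hc₁ (by simpa [initial] using radius_nonneg)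
    (by simpa only [sub_neg_eq_add, Real.norm_eq_abs] using step) k

theorem stmt5_general {c₂ : ℝ} (hc₂0 : 0 ≤ c₂) (hc₂ : c₂ < 1)
    {g η v : ℕ → H} {β : ℕ → ℝ} (hg : ∀ k, g k ≠ 0) (hη0 : η 0 = -g 0)
    (hrec : ∀ k, η (k + 1) = -g (k + 1) + β (k + 1) • v k)
    (hβ : ∀ k, |β (k + 1)| ≤ ‖g (k + 1)‖ ^ 2 / ‖g k‖ ^ 2)
    (hwolfe : ∀ k, |⟪g (k + 1), v k⟫| ≤ c₂ * |⟪g k, η k⟫|) (k : ℕ) :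
    (c₂ < 1 / 2 → ⟪g k, η k⟫ < 0) ∧
      -(1 / (1 - c₂)) ≤ ⟪g k, η k⟫ / ‖g k‖ ^ 2 ∧
      ⟪g k, η k⟫ / ‖g k‖ ^ 2 ≤ -((1 - 2 * c₂) / (1 - c₂)) := by
  have hc : 0 < 1 - c₂ := sub_pos.mpr hc₂
  obtain ⟨lower, upper⟩ := abs_le.mp <|
    abs_inner_div_norm_sq_add_one_le_of_abs_coeff_le hc₂0 hc₂ hg hη0 hrec hβ hwolfe k
  have lower_endpoint : -(1 / (1 - c₂)) = -(c₂ / (1 - c₂)) - 1 := by field_simp; ring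
  have upper_endpoint : -((1 - 2 * c₂) / (1 - c₂)) = c₂ / (1 - c₂) - 1 := by field_simp; ring
  refine ⟨fun hhalf ↦ ?_, by linarith, by linarith⟩
  have radius_lt_one : c₂ / (1 - c₂) < 1 := (div_lt_one hc).mpr (by linarith)
  have slope_neg : ⟪g k, η k⟫ / ‖g k‖ ^ 2 < 0 := by linarith
  exact neg_of_div_neg_left slope_neg (sq_nonneg ‖g k‖)

end InnerProductSpace

/-- Descent property of the decentralized Fletcher–Reeves directions. -/
theorem stmt5 {H : Type*} [NormedAddCommGroup H] [InnerProductSpace ℝ H]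
    (c₂ : ℝ) (hc₂0 : 0 < c₂) (hc₂ : c₂ < 1 / 2)
    (g η v : ℕ → H)
    (hg : ∀ k, g k ≠ 0)
    (hη0 : η 0 = -g 0)
    (hrec : ∀ k, η (k + 1) = -g (k + 1) + (‖g (k + 1)‖ ^ 2 / ‖g k‖ ^ 2) • v k)
    (hwolfe : ∀ k, |(⟪g (k + 1), v k⟫)| ≤ c₂ * |(⟪g k, η k⟫)|) :
    ∀ k, ⟪g k, η k⟫ < 0 ∧
      -(1 / (1 - c₂)) ≤ ⟪g k, η k⟫ / ‖g k‖ ^ 2 ∧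
      ⟪g k, η k⟫ / ‖g k‖ ^ 2 ≤ -((1 - 2 * c₂) / (1 - c₂)) :=
  -- The truncated `k - 1` is wrong only for `β 0`, which the recursion never reads.
  fun k ↦ (stmt5_general (β := fun k ↦ ‖g k‖ ^ 2 / ‖g (k - 1)‖ ^ 2) hc₂0.le (by linarith) hg hη0
    hrec (fun _ ↦ (abs_of_nonneg (by positivity)).le) hwolfe k).imp_left (· hc₂)
end

section
/- Let 0 < c₂ < 1/2 and suppose g_k ≠ 0 for all k ≥ 0, η_0 = −g_0, η_{k+1} = −g_{k+1} + β_{k+1} v_k with β_{k+1} = ‖g_{k+1}‖²/‖g_k‖², and for every k ≥ 0 both |⟨g_{k+1}, v_k⟩| ≤ c₂ |⟨g_k, η_k⟩| and ‖v_k‖ ≤ ‖η_k‖ hold. Then with c := (1+c₂)/(1−c₂), for every k ≥ 0: ‖η_{k+1}‖² ≤ c‖g_{k+1}‖² + β_{k+1}²‖η_k‖². -/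
open scoped RealInnerProductSpace

/-!
Expanding `‖-g' + β • v‖ ^ 2`, everything reduces to bounding the cross term `β * ⟪g', v⟫`. If
`|⟪g, η⟫| ≤ M * ‖g‖ ^ 2`, the Wolfe-type condition and `|β| * ‖g‖ ^ 2 ≤ ‖g'‖ ^ 2` bound the cross
term by `c * M * ‖g'‖ ^ 2`, so that `|⟪g', η'⟫| ≤ (1 + c * M) * ‖g'‖ ^ 2` for the new direction
`η' = -g' + β • v`. The constant `M = (1 - c)⁻¹` is the fixed point of `M ↦ 1 + c * M`, so this
bound propagates along the iteration, and `1 + 2 * (c * M) = (1 + c) / (1 - c)`.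
-/

section ConjugateGradient

variable {H : Type*} [NormedAddCommGroup H] [InnerProductSpace ℝ H]

lemma abs_inner_neg_add_smul_le (g v : H) (β : ℝ) :
    |⟪g, -g + β • v⟫| ≤ ‖g‖ ^ 2 + |β * ⟪g, v⟫| := by
  rw [inner_add_right, inner_neg_right, real_inner_self_eq_norm_sq, real_inner_smul_right]
  calc |-‖g‖ ^ 2 + β * ⟪g, v⟫| ≤ |-‖g‖ ^ 2| + |β * ⟪g, v⟫| := abs_add_le _ _
    _ = ‖g‖ ^ 2 + |β * ⟪g, v⟫| := by rw [abs_neg, abs_of_nonneg (sq_nonneg _)]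

lemma norm_neg_add_smul_sq_le (g v : H) (β : ℝ) :
    ‖-g + β • v‖ ^ 2 ≤ ‖g‖ ^ 2 + 2 * |β * ⟪g, v⟫| + β ^ 2 * ‖v‖ ^ 2 := by
  have expansion : ‖-g + β • v‖ ^ 2 = ‖g‖ ^ 2 - 2 * (β * ⟪g, v⟫) + β ^ 2 * ‖v‖ ^ 2 := by
    rw [norm_add_sq_real, norm_neg, inner_neg_left, real_inner_smul_right, norm_smul, mul_pow,
      Real.norm_eq_abs, sq_abs]
    ring
  linarith [neg_abs_le (β * ⟪g, v⟫)]

lemma abs_mul_inner_le_of_abs_inner_le {g g' η v : H} {β c M : ℝ} (hc : 0 ≤ c) (hM : 0 ≤ M)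
    (hβ : |β| * ‖g‖ ^ 2 ≤ ‖g'‖ ^ 2) (hwolfe : |⟪g', v⟫| ≤ c * |⟪g, η⟫|)
    (hη : |⟪g, η⟫| ≤ M * ‖g‖ ^ 2) :
    |β * ⟪g', v⟫| ≤ c * M * ‖g'‖ ^ 2 :=
  calc |β * ⟪g', v⟫| = |β| * |⟪g', v⟫| := abs_mul _ _
    _ ≤ |β| * (c * (M * ‖g‖ ^ 2)) := by
      gcongr
      exact hwolfe.trans (by gcongr)
    _ = c * M * (|β| * ‖g‖ ^ 2) := by ring
    _ ≤ c * M * ‖g'‖ ^ 2 := by gcongr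

lemma abs_inner_direction_le {c : ℝ} (hc₀ : 0 ≤ c) (hc₁ : c < 1) {g η v : ℕ → H} {β : ℕ → ℝ}
    (hβ : ∀ k, |β k| * ‖g k‖ ^ 2 ≤ ‖g (k + 1)‖ ^ 2)
    (hη0 : η 0 = -g 0)
    (hrec : ∀ k, η (k + 1) = -g (k + 1) + β k • v k)
    (hwolfe : ∀ k, |⟪g (k + 1), v k⟫| ≤ c * |⟪g k, η k⟫|) (k : ℕ) :
    |⟪g k, η k⟫| ≤ (1 - c)⁻¹ * ‖g k‖ ^ 2 := by
  have one_sub_pos : 0 < 1 - c := sub_pos.mpr hc₁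
  induction k with
  | zero =>
    rw [hη0, inner_neg_right, abs_neg, real_inner_self_eq_norm_sq, abs_of_nonneg (sq_nonneg _)]
    exact le_mul_of_one_le_left (sq_nonneg _) ((one_le_inv₀ one_sub_pos).mpr (by linarith))
  | succ k ih =>
    have fixed_point : 1 + c * (1 - c)⁻¹ = (1 - c)⁻¹ := by
      field_simp
      ring
    have cross_term : |β k * ⟪g (k + 1), v k⟫| ≤ c * (1 - c)⁻¹ * ‖g (k + 1)‖ ^ 2 :=
      abs_mul_inner_le_of_abs_inner_le hc₀ (inv_nonneg.mpr one_sub_pos.le) (hβ k) (hwolfe k) ih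
    calc |⟪g (k + 1), η (k + 1)⟫|
        ≤ ‖g (k + 1)‖ ^ 2 + |β k * ⟪g (k + 1), v k⟫| := by
          rw [hrec k]
          exact abs_inner_neg_add_smul_le _ _ _
      _ ≤ ‖g (k + 1)‖ ^ 2 + c * (1 - c)⁻¹ * ‖g (k + 1)‖ ^ 2 := by gcongr
      _ = (1 + c * (1 - c)⁻¹) * ‖g (k + 1)‖ ^ 2 := by ring
      _ = (1 - c)⁻¹ * ‖g (k + 1)‖ ^ 2 := by rw [fixed_point]

theorem stmt6_general {c : ℝ} (hc₀ : 0 ≤ c) (hc₁ : c < 1) {g η v : ℕ → H} {β : ℕ → ℝ}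
    (hβ : ∀ k, |β k| * ‖g k‖ ^ 2 ≤ ‖g (k + 1)‖ ^ 2)
    (hη0 : η 0 = -g 0)
    (hrec : ∀ k, η (k + 1) = -g (k + 1) + β k • v k)
    (hwolfe : ∀ k, |⟪g (k + 1), v k⟫| ≤ c * |⟪g k, η k⟫|)
    (hv : ∀ k, ‖v k‖ ≤ ‖η k‖) (k : ℕ) :
    ‖η (k + 1)‖ ^ 2 ≤ (1 + c) / (1 - c) * ‖g (k + 1)‖ ^ 2 + β k ^ 2 * ‖η k‖ ^ 2 := by
  have one_sub_pos : 0 < 1 - c := sub_pos.mpr hc₁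
  have cross_term : |β k * ⟪g (k + 1), v k⟫| ≤ c * (1 - c)⁻¹ * ‖g (k + 1)‖ ^ 2 :=
    abs_mul_inner_le_of_abs_inner_le hc₀ (inv_nonneg.mpr one_sub_pos.le) (hβ k) (hwolfe k)
      (abs_inner_direction_le hc₀ hc₁ hβ hη0 hrec hwolfe k)
  calc ‖η (k + 1)‖ ^ 2
      ≤ ‖g (k + 1)‖ ^ 2 + 2 * |β k * ⟪g (k + 1), v k⟫| + β k ^ 2 * ‖v k‖ ^ 2 := by
        rw [hrec k]
        exact norm_neg_add_smul_sq_le _ _ _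
    _ ≤ ‖g (k + 1)‖ ^ 2 + 2 * (c * (1 - c)⁻¹ * ‖g (k + 1)‖ ^ 2) + β k ^ 2 * ‖η k‖ ^ 2 := by
        gcongr
        exact hv k
    _ = (1 + c) / (1 - c) * ‖g (k + 1)‖ ^ 2 + β k ^ 2 * ‖η k‖ ^ 2 := by
        field_simp
        ring

end ConjugateGradient

/-- recurrence inequality for the norms of the Fletcher–Reeves directions. -/
theorem stmt6 {H : Type*} [NormedAddCommGroup H] [InnerProductSpace ℝ H]
    (c₂ : ℝ) (hc₂0 : 0 < c₂) (hc₂ : c₂ < 1 / 2)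
    (g η v : ℕ → H)
    (hg : ∀ k, g k ≠ 0)
    (hη0 : η 0 = -g 0)
    (hrec : ∀ k, η (k + 1) = -g (k + 1) + (‖g (k + 1)‖ ^ 2 / ‖g k‖ ^ 2) • v k)
    (hwolfe : ∀ k, |(⟪g (k + 1), v k⟫)| ≤ c₂ * |(⟪g k, η k⟫)|)
    (hv : ∀ k, ‖v k‖ ≤ ‖η k‖) :
    ∀ k, ‖η (k + 1)‖ ^ 2 ≤ (1 + c₂) / (1 - c₂) * ‖g (k + 1)‖ ^ 2 +
      (‖g (k + 1)‖ ^ 2 / ‖g k‖ ^ 2) ^ 2 * ‖η k‖ ^ 2 := by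
  have hβ (k : ℕ) : |‖g (k + 1)‖ ^ 2 / ‖g k‖ ^ 2| * ‖g k‖ ^ 2 ≤ ‖g (k + 1)‖ ^ 2 := by
    rw [abs_of_nonneg (by positivity),
      div_mul_cancel₀ _ (pow_ne_zero 2 (norm_ne_zero_iff.mpr (hg k)))]
  exact stmt6_general hc₂0.le (by linarith) hβ hη0 hrec hwolfe hv
end

section
/- Let 0 < c₂ < 1/2 and suppose g_k ≠ 0 for all k ≥ 0, η_0 = −g_0, η_{k+1} = −g_{k+1} + β_{k+1} v_k with β_{k+1} = ‖g_{k+1}‖²/‖g_k‖², and for every k ≥ 0 both |⟨g_{k+1}, v_k⟩| ≤ c₂ |⟨g_k, η_k⟩| and ‖v_k‖ ≤ ‖η_k‖ hold. Then with c := (1+c₂)/(1−c₂), for every k ≥ 0: ‖η_k‖² < c · ‖g_k‖⁴ · ∑_{j=0}^{k} ‖g_j‖^{−2}. -/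
open scoped RealInnerProductSpace

/-!
Write `m = c / (1 - c)`, so that `c * (1 + m) = m`. The Wolfe-type condition propagates
`|⟪g k, η k⟫| ≤ (1 + m) * ‖g k‖ ^ 2` from `k` to `k + 1`, and hence gives
`|⟪g (k + 1), v k⟫| ≤ m * ‖g k‖ ^ 2` for every `k`. The Fletcher–Reeves coefficient is exactly the
one for which expanding `‖η (k + 1)‖ ^ 2` and dividing by `‖g (k + 1)‖ ^ 4` produces an additive
recursion for `‖η k‖ ^ 2 / ‖g k‖ ^ 4`, with increment at most
`(1 + 2 * m) * (‖g (k + 1)‖ ^ 2)⁻¹`; moreover `1 + 2 * m = (1 + c) / (1 - c)`.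
-/

theorem lt_sum_range_succ_of_le_add {M : Type*} [AddCommMonoid M] [Preorder M]
    [AddRightStrictMono M] {a b : ℕ → M} (h0 : a 0 < b 0)
    (h : ∀ k, a (k + 1) ≤ a k + b (k + 1)) (k : ℕ) :
    a k < ∑ j ∈ Finset.range (k + 1), b j := by
  induction k with
  | zero => simpa only [zero_add, Finset.sum_range_one] using h0
  | succ k ih =>
    rw [Finset.sum_range_succ]
    exact (h k).trans_lt (add_lt_add_left ih _)

section FletcherReeves

variable {H : Type*} [NormedAddCommGroup H]

theorem norm_sq_div_norm_pow_four_lt {x : H} {c : ℝ} (hx : x ≠ 0) (hc0 : 0 < c) (hc1 : c < 1) :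
    ‖x‖ ^ 2 / ‖x‖ ^ 4 < (1 + c) / (1 - c) * (‖x‖ ^ 2)⁻¹ := by
  have hx' : 0 < ‖x‖ := norm_pos_iff.mpr hx
  have hone : 1 < (1 + c) / (1 - c) := (one_lt_div (sub_pos.mpr hc1)).mpr (by linarith)
  calc ‖x‖ ^ 2 / ‖x‖ ^ 4 = (‖x‖ ^ 2)⁻¹ := by field_simp
    _ < (1 + c) / (1 - c) * (‖x‖ ^ 2)⁻¹ :=
        lt_mul_of_one_lt_left (inv_pos.mpr (pow_pos hx' 2)) hone

/-- The Fletcher–Reeves coefficient `β` for passing from the gradient `x` to the next gradient `y`.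
Its value is `0` when `x = 0`, by the convention for division. -/
noncomputable def fletcherReevesCoeff (x y : H) : ℝ :=
  ‖y‖ ^ 2 / ‖x‖ ^ 2

theorem fletcherReevesCoeff_nonneg (x y : H) : 0 ≤ fletcherReevesCoeff x y := by
  unfold fletcherReevesCoeff
  positivity

theorem fletcherReevesCoeff_mul_norm_sq {x : H} (hx : x ≠ 0) (y : H) :
    fletcherReevesCoeff x y * ‖x‖ ^ 2 = ‖y‖ ^ 2 :=
  div_mul_cancel₀ _ (pow_ne_zero 2 (norm_ne_zero_iff.mpr hx))

variable [InnerProductSpace ℝ H]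

/-- The Fletcher–Reeves search direction at the gradient `y`, where `x` is the previous gradient
and `w` is the previous direction after averaging and projection. -/
noncomputable def fletcherReevesDirection (x y w : H) : H :=
  -y + fletcherReevesCoeff x y • w

section Step

variable {x y w : H} {m : ℝ}

theorem fletcherReevesCoeff_mul_abs_inner_le (hx : x ≠ 0) (h : |⟪y, w⟫| ≤ m * ‖x‖ ^ 2) :
    fletcherReevesCoeff x y * |⟪y, w⟫| ≤ m * ‖y‖ ^ 2 :=
  calc fletcherReevesCoeff x y * |⟪y, w⟫|
      ≤ fletcherReevesCoeff x y * (m * ‖x‖ ^ 2) :=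
        mul_le_mul_of_nonneg_left h (fletcherReevesCoeff_nonneg x y)
    _ = m * ‖y‖ ^ 2 := by rw [mul_left_comm, fletcherReevesCoeff_mul_norm_sq hx]

theorem abs_inner_fletcherReevesDirection_le (hx : x ≠ 0) (h : |⟪y, w⟫| ≤ m * ‖x‖ ^ 2) :
    |⟪y, fletcherReevesDirection x y w⟫| ≤ (1 + m) * ‖y‖ ^ 2 :=
  calc |⟪y, fletcherReevesDirection x y w⟫|
      = |-‖y‖ ^ 2 + fletcherReevesCoeff x y * ⟪y, w⟫| := by
        rw [fletcherReevesDirection, inner_add_right, inner_neg_right,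
          real_inner_self_eq_norm_sq, real_inner_smul_right]
    _ ≤ ‖y‖ ^ 2 + fletcherReevesCoeff x y * |⟪y, w⟫| := by
        grw [abs_add_le]
        rw [abs_neg, abs_sq, abs_mul, abs_of_nonneg (fletcherReevesCoeff_nonneg x y)]
    _ ≤ (1 + m) * ‖y‖ ^ 2 := by
        linarith [fletcherReevesCoeff_mul_abs_inner_le hx h]

theorem norm_fletcherReevesDirection_sq (x y w : H) :
    ‖fletcherReevesDirection x y w‖ ^ 2 =
      ‖y‖ ^ 2 - 2 * (fletcherReevesCoeff x y * ⟪y, w⟫)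
        + fletcherReevesCoeff x y ^ 2 * ‖w‖ ^ 2 := by
  rw [fletcherReevesDirection, norm_add_sq_real, norm_neg, inner_neg_left, real_inner_smul_right,
    norm_smul, mul_pow, Real.norm_eq_abs, sq_abs]
  ring

theorem norm_fletcherReevesDirection_sq_le (hx : x ≠ 0) (h : |⟪y, w⟫| ≤ m * ‖x‖ ^ 2) :
    ‖fletcherReevesDirection x y w‖ ^ 2 ≤
      (1 + 2 * m) * ‖y‖ ^ 2 + fletcherReevesCoeff x y ^ 2 * ‖w‖ ^ 2 := by
  have hcross : -(fletcherReevesCoeff x y * ⟪y, w⟫) ≤ m * ‖y‖ ^ 2 := by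
    rw [← mul_neg]
    exact (mul_le_mul_of_nonneg_left (neg_le_abs _) (fletcherReevesCoeff_nonneg x y)).trans
      (fletcherReevesCoeff_mul_abs_inner_le hx h)
  rw [norm_fletcherReevesDirection_sq]
  linarith

theorem norm_fletcherReevesDirection_sq_div_le (hx : x ≠ 0) (hy : y ≠ 0)
    (h : |⟪y, w⟫| ≤ m * ‖x‖ ^ 2) :
    ‖fletcherReevesDirection x y w‖ ^ 2 / ‖y‖ ^ 4 ≤
      ‖w‖ ^ 2 / ‖x‖ ^ 4 + (1 + 2 * m) * (‖y‖ ^ 2)⁻¹ := by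
  have hx' := norm_ne_zero_iff.mpr hx
  have hy' := norm_ne_zero_iff.mpr hy
  calc ‖fletcherReevesDirection x y w‖ ^ 2 / ‖y‖ ^ 4
      ≤ ((1 + 2 * m) * ‖y‖ ^ 2 + fletcherReevesCoeff x y ^ 2 * ‖w‖ ^ 2) / ‖y‖ ^ 4 := by
        gcongr
        exact norm_fletcherReevesDirection_sq_le hx h
    _ = ‖w‖ ^ 2 / ‖x‖ ^ 4 + (1 + 2 * m) * (‖y‖ ^ 2)⁻¹ := by
        unfold fletcherReevesCoeff
        field_simp
        ring

theorem abs_inner_le_of_wolfe {c : ℝ} {d : H} (hc0 : 0 ≤ c) (hc1 : c < 1)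
    (hwolfe : |⟪y, w⟫| ≤ c * |⟪x, d⟫|) (h : |⟪x, d⟫| ≤ (1 + c / (1 - c)) * ‖x‖ ^ 2) :
    |⟪y, w⟫| ≤ c / (1 - c) * ‖x‖ ^ 2 := by
  have hfix : c * (1 + c / (1 - c)) = c / (1 - c) := by
    have := (sub_pos.mpr hc1).ne'
    field_simp
    ring
  calc |⟪y, w⟫| ≤ c * |⟪x, d⟫| := hwolfe
    _ ≤ c * ((1 + c / (1 - c)) * ‖x‖ ^ 2) := mul_le_mul_of_nonneg_left h hc0
    _ = c / (1 - c) * ‖x‖ ^ 2 := by rw [← mul_assoc, hfix]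

end Step

section Sequence

variable {c : ℝ} {g η v : ℕ → H}

theorem abs_inner_gradient_direction_le (hc0 : 0 ≤ c) (hc1 : c < 1) (hg : ∀ k, g k ≠ 0)
    (hη0 : η 0 = -g 0) (hrec : ∀ k, η (k + 1) = fletcherReevesDirection (g k) (g (k + 1)) (v k))
    (hwolfe : ∀ k, |⟪g (k + 1), v k⟫| ≤ c * |⟪g k, η k⟫|) (k : ℕ) :
    |⟪g k, η k⟫| ≤ (1 + c / (1 - c)) * ‖g k‖ ^ 2 := by
  induction k with
  | zero =>
    have hm : 0 ≤ c / (1 - c) := div_nonneg hc0 (sub_pos.mpr hc1).le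
    rw [hη0, inner_neg_right, abs_neg, real_inner_self_eq_norm_sq, abs_sq]
    exact le_mul_of_one_le_left (sq_nonneg _) (le_add_of_nonneg_right hm)
  | succ k ih =>
    rw [hrec]
    exact abs_inner_fletcherReevesDirection_le (hg k) (abs_inner_le_of_wolfe hc0 hc1 (hwolfe k) ih)

theorem norm_direction_sq_div_succ_le (hc0 : 0 ≤ c) (hc1 : c < 1) (hg : ∀ k, g k ≠ 0)
    (hη0 : η 0 = -g 0) (hrec : ∀ k, η (k + 1) = fletcherReevesDirection (g k) (g (k + 1)) (v k))
    (hwolfe : ∀ k, |⟪g (k + 1), v k⟫| ≤ c * |⟪g k, η k⟫|) (hv : ∀ k, ‖v k‖ ≤ ‖η k‖) (k : ℕ) :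
    ‖η (k + 1)‖ ^ 2 / ‖g (k + 1)‖ ^ 4 ≤
      ‖η k‖ ^ 2 / ‖g k‖ ^ 4 + (1 + c) / (1 - c) * (‖g (k + 1)‖ ^ 2)⁻¹ := by
  have hinner : |⟪g (k + 1), v k⟫| ≤ c / (1 - c) * ‖g k‖ ^ 2 :=
    abs_inner_le_of_wolfe hc0 hc1 (hwolfe k)
      (abs_inner_gradient_direction_le hc0 hc1 hg hη0 hrec hwolfe k)
  have hconst : 1 + 2 * (c / (1 - c)) = (1 + c) / (1 - c) := by
    have := (sub_pos.mpr hc1).ne'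
    field_simp
    ring
  calc ‖η (k + 1)‖ ^ 2 / ‖g (k + 1)‖ ^ 4
      ≤ ‖v k‖ ^ 2 / ‖g k‖ ^ 4 + (1 + c) / (1 - c) * (‖g (k + 1)‖ ^ 2)⁻¹ := by
        rw [hrec, ← hconst]
        exact norm_fletcherReevesDirection_sq_div_le (hg k) (hg (k + 1)) hinner
    _ ≤ ‖η k‖ ^ 2 / ‖g k‖ ^ 4 + (1 + c) / (1 - c) * (‖g (k + 1)‖ ^ 2)⁻¹ := by
        gcongr
        exact hv k

end Sequence

end FletcherReeves

theorem stmt7_general {H : Type*} [NormedAddCommGroup H] [InnerProductSpace ℝ H]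
    {c : ℝ} (hc0 : 0 < c) (hc1 : c < 1) {g η v : ℕ → H} (hg : ∀ k, g k ≠ 0)
    (hη0 : η 0 = -g 0) (hrec : ∀ k, η (k + 1) = fletcherReevesDirection (g k) (g (k + 1)) (v k))
    (hwolfe : ∀ k, |⟪g (k + 1), v k⟫| ≤ c * |⟪g k, η k⟫|) (hv : ∀ k, ‖v k‖ ≤ ‖η k‖) (k : ℕ) :
    ‖η k‖ ^ 2 < (1 + c) / (1 - c) * ‖g k‖ ^ 4 *
      ∑ j ∈ Finset.range (k + 1), (‖g j‖ ^ 2)⁻¹ := by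
  have hinit : ‖η 0‖ ^ 2 / ‖g 0‖ ^ 4 < (1 + c) / (1 - c) * (‖g 0‖ ^ 2)⁻¹ := by
    rw [hη0, norm_neg]
    exact norm_sq_div_norm_pow_four_lt (hg 0) hc0 hc1
  have hratio : ‖η k‖ ^ 2 / ‖g k‖ ^ 4 <
      ∑ j ∈ Finset.range (k + 1), (1 + c) / (1 - c) * (‖g j‖ ^ 2)⁻¹ :=
    lt_sum_range_succ_of_le_add (a := fun j ↦ ‖η j‖ ^ 2 / ‖g j‖ ^ 4) hinit
      (norm_direction_sq_div_succ_le hc0.le hc1 hg hη0 hrec hwolfe hv) k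
  rwa [← Finset.mul_sum, div_lt_iff₀ (pow_pos (norm_pos_iff.mpr (hg k)) 4),
    mul_right_comm] at hratio

/-- cumulative bound on the norms of the Fletcher–Reeves directions. -/
theorem stmt7 {H : Type*} [NormedAddCommGroup H] [InnerProductSpace ℝ H]
    (c₂ : ℝ) (hc₂0 : 0 < c₂) (hc₂ : c₂ < 1 / 2)
    (g η v : ℕ → H)
    (hg : ∀ k, g k ≠ 0)
    (hη0 : η 0 = -g 0)
    (hrec : ∀ k, η (k + 1) = -g (k + 1) + (‖g (k + 1)‖ ^ 2 / ‖g k‖ ^ 2) • v k)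
    (hwolfe : ∀ k, |(⟪g (k + 1), v k⟫)| ≤ c₂ * |(⟪g k, η k⟫)|)
    (hv : ∀ k, ‖v k‖ ≤ ‖η k‖) :
    ∀ k, ‖η k‖ ^ 2 < (1 + c₂) / (1 - c₂) * ‖g k‖ ^ 4 *
      ∑ j ∈ Finset.range (k + 1), (‖g j‖ ^ 2)⁻¹ :=
  stmt7_general hc₂0 (hc₂.trans one_half_lt_one) hg hη0 hrec hwolfe hv
end

section
/- (Global convergence, combination step.) Let f_1,…,f_n : ℝ^{d×r} → ℝ be differentiable, each with L-Lipschitz Euclidean gradient and ‖∇f_i(x)‖ ≤ L_f on St(d,r); set L_g := L + 2L_f and f := (1/n)∑_i f_i. Let x_{i,k} ∈ St(d,r) for all i, k, and for each k let x̄_k ∈ St(d,r). Suppose there are constants C > 0, γ ∈ (0,1) and a sequence α_k → 0 such that (1/n)∑_{i=1}^n ‖x̄_k − x_{i,k}‖² ≤ C·L_g²·α_k²/(1−γ)² for all k, and that lim inf_{k→∞} ‖(1/n)∑_{i=1}^n grad f_i(x_{i,k})‖ = 0. Then lim inf_{k→∞} ‖grad f(x̄_k)‖² = 0. -/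
open scoped RealInnerProductSpace

attribute [local instance] Matrix.frobeniusNormedAddCommGroup Matrix.frobeniusNormedSpace

/-!
The averaged Riemannian gradient `z ↦ (1/n) ∑ᵢ P_{T_{zᵢ}}(∇fᵢ(zᵢ))` is a continuous function of the
tuple `z` on the compact product `St(d,r)ⁿ`, hence uniformly continuous there. Its value at
`(x_{1,k}, …, x_{n,k})` is the quantity in the hypothesis and its value at the diagonal point
`(x̄ₖ, …, x̄ₖ)` is `grad f(x̄ₖ)`. Consensus makes these two tuples asymptotically equal, so both
sequences of values have the same cluster points; since the norms are bounded on the compact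
product, their lower limit vanishes exactly when `0` is a cluster point of them.
-/

open Filter Set Topology Uniformity

section ClusterPoints

variable {κ : Type*} {l : Filter κ}

theorem liminf_eq_of_mapClusterPt {α : Type*} [ConditionallyCompleteLinearOrder α]
    [TopologicalSpace α] [OrderTopology α] [NoMaxOrder α] {u : κ → α} {c : α}
    (hu : MapClusterPt c l u) (hc : ∀ k, c ≤ u k) : liminf u l = c := by
  obtain ⟨b, hcb⟩ := exists_gt c
  have hfreq : ∃ᶠ k in l, u k ≤ b := (hu.frequently (Iio_mem_nhds hcb)).mono fun _ hk => le_of_lt hk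
  exact le_antisymm (hu.liminf_le (isBoundedUnder_of ⟨c, hc⟩))
    (le_liminf_of_le (IsCoboundedUnder.of_frequently_le hfreq) (.of_forall hc))

theorem mapClusterPt_comp_of_tendsto_uniformity {α β : Type*} [UniformSpace α] [UniformSpace β]
    {S : Set α} {Φ : α → β} (hΦ : UniformContinuousOn Φ S) {u v : κ → α} (hu : ∀ k, u k ∈ S)
    (hv : ∀ k, v k ∈ S) (huv : Tendsto (fun k => (u k, v k)) l (𝓤 α)) {b : β}
    (hb : MapClusterPt b l (Φ ∘ u)) : MapClusterPt b l (Φ ∘ v) := by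
  have hΦuv : Tendsto (fun k => (Φ (u k), Φ (v k))) l (𝓤 β) :=
    Tendsto.comp hΦ (tendsto_inf.2
      ⟨huv, tendsto_principal.2 (.of_forall fun k => mk_mem_prod (hu k) (hv k))⟩)
  obtain ⟨U, hUl, hU⟩ := mapClusterPt_iff_ultrafilter.1 hb
  exact mapClusterPt_iff_ultrafilter.2 ⟨U, hUl, hU.congr_uniformity (hΦuv.mono_left hUl)⟩

theorem tendsto_pi_uniformity {ι : Type*} {α : ι → Type*} [∀ i, UniformSpace (α i)]
    {u v : κ → ∀ i, α i} :
    Tendsto (fun k => (u k, v k)) l (𝓤 (∀ i, α i)) ↔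
      ∀ i, Tendsto (fun k => (u k i, v k i)) l (𝓤 (α i)) := by
  simp only [Pi.uniformity, tendsto_iInf, tendsto_comap_iff, Function.comp_def]

theorem tendsto_zero_of_tendsto_sum_sq {ι : Type*} [Fintype ι] {a : κ → ι → ℝ}
    (ha : Tendsto (fun k => ∑ i, a k i ^ 2) l (𝓝 0)) (i : ι) : Tendsto (a · i) l (𝓝 0) := by
  refine squeeze_zero_norm (fun k => Real.abs_le_sqrt ?_) (by simpa using ha.sqrt)
  exact Finset.single_le_sum (f := fun j => a k j ^ 2) (fun j _ => sq_nonneg _) (Finset.mem_univ i)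

theorem tendsto_uniformity_const_of_tendsto_mean_sq {E : Type*} [SeminormedAddCommGroup E] {n : ℕ}
    {u : κ → E} {v : κ → Fin n → E}
    (h : Tendsto (fun k => (n : ℝ)⁻¹ * ∑ i, ‖u k - v k i‖ ^ 2) l (𝓝 0)) :
    Tendsto (fun k => (v k, fun _ => u k)) l (𝓤 (Fin n → E)) := by
  refine tendsto_pi_uniformity.2 fun i => tendsto_uniformity_iff_dist_tendsto_zero.2 ?_
  have hn : (n : ℝ) ≠ 0 := Nat.cast_ne_zero.2 i.pos.ne'
  have hsum : Tendsto (fun k => ∑ j, ‖u k - v k j‖ ^ 2) l (𝓝 0) := by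
    simpa only [mul_inv_cancel_left₀ hn, mul_zero] using h.const_mul (n : ℝ)
  simpa only [dist_eq_norm'] using tendsto_zero_of_tendsto_sum_sq hsum i

end ClusterPoints

theorem continuous_of_norm_sub_le_mul {E F : Type*} [SeminormedAddCommGroup E]
    [SeminormedAddCommGroup F] {g : E → F} {K : ℝ} (hg : ∀ x y, ‖g x - g y‖ ≤ K * ‖x - y‖) :
    Continuous g :=
  (LipschitzWith.of_dist_le' (by simpa only [dist_eq_norm] using hg)).continuous

theorem frobenius_norm_sq_eq_trace {m n : Type*} [Fintype m] [Fintype n] (A : Matrix m n ℝ) :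
    ‖A‖ ^ 2 = (A.transpose * A).trace := by
  rw [Matrix.frobenius_norm_def, ← Real.sqrt_eq_rpow, Real.sq_sqrt (by positivity),
    Finset.sum_comm]
  simp [Matrix.trace, Matrix.mul_apply, sq]

theorem norm_sq_of_mem_stiefel {d r : ℕ} {x : Matrix (Fin d) (Fin r) ℝ} (hx : x ∈ Stiefel d r) :
    ‖x‖ ^ 2 = r := by
  rw [frobenius_norm_sq_eq_trace, show x.transpose * x = 1 from hx]
  simp

theorem isCompact_stiefel (d r : ℕ) : IsCompact (Stiefel d r) := by
  have : ProperSpace (Matrix (Fin d) (Fin r) ℝ) := FiniteDimensional.proper ℝ _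
  refine Metric.isCompact_of_isClosed_isBounded ?_ ?_
  · exact isClosed_singleton.preimage
      (by fun_prop : Continuous fun x : Matrix (Fin d) (Fin r) ℝ => x.transpose * x)
  · exact isBounded_iff_forall_norm_le.2
      ⟨√r, fun x hx => Real.le_sqrt_of_sq_le (norm_sq_of_mem_stiefel hx).le⟩

section TangentProjection

variable {d r n : ℕ}

theorem isLinearMap_tproj (x : Matrix (Fin d) (Fin r) ℝ) : IsLinearMap ℝ (Tproj x) where
  map_add v w := by
    simp only [Tproj, Matrix.transpose_add, Matrix.mul_add, Matrix.add_mul, smul_add]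
    abel
  map_smul c v := by
    simp only [Tproj, Matrix.transpose_smul, Matrix.mul_smul, Matrix.smul_mul, ← smul_add,
      smul_sub, smul_comm c]

theorem continuousOn_tproj {X : Type*} [TopologicalSpace X] {s : Set X}
    {x v : X → Matrix (Fin d) (Fin r) ℝ} (hx : ContinuousOn x s) (hv : ContinuousOn v s) :
    ContinuousOn (fun t => Tproj (x t) (v t)) s := by
  unfold Tproj
  fun_prop

/-- The average `(1/n) ∑ᵢ P_{T_{zᵢ}}(Vᵢ(zᵢ))` of the tangent projections of the vector fields `Vᵢ`,
each taken at its own base point `zᵢ`. For `Vᵢ = ∇fᵢ` it is the average of the local Riemannian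
gradients; taking the base points as one tuple makes `grad f(y)` its value on the diagonal. -/
noncomputable def meanTproj
    (V : Fin n → Matrix (Fin d) (Fin r) ℝ → Matrix (Fin d) (Fin r) ℝ)
    (z : Fin n → Matrix (Fin d) (Fin r) ℝ) : Matrix (Fin d) (Fin r) ℝ :=
  (n : ℝ)⁻¹ • ∑ i, Tproj (z i) (V i (z i))

variable {V : Fin n → Matrix (Fin d) (Fin r) ℝ → Matrix (Fin d) (Fin r) ℝ}

theorem meanTproj_const (y : Matrix (Fin d) (Fin r) ℝ) :
    meanTproj V (fun _ => y) = Tproj y ((n : ℝ)⁻¹ • ∑ i, V i y) := by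
  have hmk (v : Matrix (Fin d) (Fin r) ℝ) : Tproj y v = (isLinearMap_tproj y).mk' _ v := rfl
  simp only [meanTproj, hmk, map_smul, map_sum]

theorem continuousOn_meanTproj {s : Set (Matrix (Fin d) (Fin r) ℝ)}
    (hV : ∀ i, ContinuousOn (V i) s) : ContinuousOn (meanTproj V) (univ.pi fun _ => s) := by
  have hproj (i : Fin n) : ContinuousOn (fun z : Fin n → Matrix (Fin d) (Fin r) ℝ => z i)
      (univ.pi fun _ => s) := (continuous_apply i).continuousOn
  have hsummand (i : Fin n) : ContinuousOn (fun z => Tproj (z i) (V i (z i)))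
      (univ.pi fun _ => s) :=
    continuousOn_tproj (hproj i) ((hV i).comp (hproj i) fun _ hz => hz i (mem_univ i))
  exact (continuousOn_finsetSum _ fun i _ => hsummand i).const_smul (n : ℝ)⁻¹

end TangentProjection

theorem stmt14_general {κ : Type*} {l : Filter κ} [l.NeBot] {d r n : ℕ}
    {V : Fin n → Matrix (Fin d) (Fin r) ℝ → Matrix (Fin d) (Fin r) ℝ}
    (hV : ∀ i, ContinuousOn (V i) (Stiefel d r))
    {x : κ → Fin n → Matrix (Fin d) (Fin r) ℝ} (hx : ∀ k i, x k i ∈ Stiefel d r)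
    {xbar : κ → Matrix (Fin d) (Fin r) ℝ} (hxbar : ∀ k, xbar k ∈ Stiefel d r)
    (hcons : Tendsto (fun k => (n : ℝ)⁻¹ * ∑ i, ‖xbar k - x k i‖ ^ 2) l (𝓝 0))
    (hliminf : liminf (fun k => ‖(n : ℝ)⁻¹ • ∑ i, Tproj (x k i) (V i (x k i))‖) l = 0) :
    liminf (fun k => ‖Tproj (xbar k) ((n : ℝ)⁻¹ • ∑ i, V i (xbar k))‖ ^ 2) l = 0 := by
  have hcompact : IsCompact (univ.pi fun _ : Fin n => Stiefel d r) :=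
    isCompact_univ_pi fun _ => isCompact_stiefel d r
  have hcont : ContinuousOn (fun z => ‖meanTproj V z‖) (univ.pi fun _ => Stiefel d r) :=
    (continuousOn_meanTproj hV).norm
  have hx_mem (k : κ) : x k ∈ univ.pi fun _ => Stiefel d r := fun i _ => hx k i
  have hbdd : IsBoundedUnder (· ≤ ·) l fun k => ‖meanTproj V (x k)‖ := by
    obtain ⟨M, hM⟩ := hcompact.exists_bound_of_continuousOn (continuousOn_meanTproj hV)
    exact isBoundedUnder_of ⟨M, fun k => hM _ (hx_mem k)⟩
  have hcluster : MapClusterPt 0 l fun k => ‖meanTproj V (x k)‖ :=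
    hliminf ▸ MapClusterPt.liminf hbdd.isCoboundedUnder_ge
      (isBoundedUnder_of ⟨0, fun _ => norm_nonneg _⟩)
  have hcluster_diag : MapClusterPt 0 l fun k => ‖meanTproj V fun _ => xbar k‖ :=
    mapClusterPt_comp_of_tendsto_uniformity (hcompact.uniformContinuousOn_of_continuous hcont)
      hx_mem (fun k _ _ => hxbar k) (tendsto_uniformity_const_of_tendsto_mean_sq hcons) hcluster
  have hcluster_sq : MapClusterPt 0 l fun k => ‖meanTproj V fun _ => xbar k‖ ^ 2 :=
    hcluster_diag.tendsto_comp (by simpa using (continuous_pow 2).tendsto (0 : ℝ))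
  simp only [← meanTproj_const]
  exact liminf_eq_of_mapClusterPt hcluster_sq fun _ => sq_nonneg _

/-- Global convergence, combination step. Here `f = (1/n)∑ᵢ fᵢ`, so that
`grad f(x̄ₖ) = P_{T_{x̄ₖ}}((1/n)∑ᵢ ∇fᵢ(x̄ₖ))`. -/
theorem stmt14 {d r n : ℕ} (L Lf C γ : ℝ) (hC : 0 < C) (hγ : γ ∈ Set.Ioo (0 : ℝ) 1)
    (f : Fin n → Matrix (Fin d) (Fin r) ℝ → ℝ)
    (nabla : Fin n → Matrix (Fin d) (Fin r) ℝ → Matrix (Fin d) (Fin r) ℝ)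
    (hdiff : ∀ i, Differentiable ℝ (f i))
    (hgrad : ∀ i x v, fderiv ℝ (f i) x v = Matrix.trace ((nabla i x).transpose * v))
    (hLip : ∀ i x y, ‖nabla i x - nabla i y‖ ≤ L * ‖x - y‖)
    (hbd : ∀ i, ∀ x ∈ Stiefel d r, ‖nabla i x‖ ≤ Lf)
    (x : ℕ → Fin n → Matrix (Fin d) (Fin r) ℝ) (hx : ∀ k i, x k i ∈ Stiefel d r)
    (xbar : ℕ → Matrix (Fin d) (Fin r) ℝ) (hxbar : ∀ k, xbar k ∈ Stiefel d r)
    (α : ℕ → ℝ) (hα : Filter.Tendsto α Filter.atTop (nhds 0))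
    (hcons : ∀ k, (n : ℝ)⁻¹ * ∑ i, ‖xbar k - x k i‖ ^ 2 ≤
      C * (L + 2 * Lf) ^ 2 * α k ^ 2 / (1 - γ) ^ 2)
    (hliminf : Filter.liminf
      (fun k => ‖(n : ℝ)⁻¹ • ∑ i, Tproj (x k i) (nabla i (x k i))‖) Filter.atTop = 0) :
    Filter.liminf
      (fun k => ‖Tproj (xbar k) ((n : ℝ)⁻¹ • ∑ i, nabla i (xbar k))‖ ^ 2) Filter.atTop = 0 := by
  have hα_sq : Tendsto (fun k => C * (L + 2 * Lf) ^ 2 * α k ^ 2 / (1 - γ) ^ 2) atTop (𝓝 0) := by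
    simpa using ((hα.pow 2).const_mul (C * (L + 2 * Lf) ^ 2)).div_const ((1 - γ) ^ 2)
  exact stmt14_general (fun i => (continuous_of_norm_sub_le_mul (hLip i)).continuousOn) hx hxbar
    (squeeze_zero (fun _ => by positivity) hcons hα_sq) hliminf
end
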